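/- arXiv:2001.01674 — 2 statements merged into one kernel-verified Lean document; each statement's English description precedes it below -/
import Mathlib

section
/- Let n ≥ 2 and q ∈ [1,∞). There is a constant C such that for all g ∈ L¹(𝕊^{n-1}, dσ), ( ∫_{𝕊^{n-1}} ( sup_{v ∈ ⟨ω⟩^⊥} X(|ĝdσ|²)(ω,v) )^q dσ(ω) )^{1/q} ≤ C ‖ x ↦ (|g|dσ)^∧(x) · |x|^{1/2 − n/(2q)} ‖_{L^{2q,2}(ℝⁿ)}², where (|g|dσ)^∧ denotes the Fourier extension of |g|. -/
open MeasureTheory Metric Real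
open scoped ENNReal NNReal RealInnerProductSpace

noncomputable section

abbrev Euc (n : ℕ) := EuclideanSpace ℝ (Fin n)

/-- Surface measure on the unit sphere `𝕊^{n-1}`. -/
def sphMeasure (n : ℕ) : Measure (Euc n) :=
  (μH[(n : ℝ) - 1]).restrict (sphere (0 : Euc n) 1)

/-- Fourier extension operator. -/
def extOp (n : ℕ) (g : Euc n → ℂ) (x : Euc n) : ℂ :=
  ∫ ξ, Complex.exp (Complex.I * (⟪x, ξ⟫ : ℝ)) * g ξ ∂(sphMeasure n)

/-- X-ray transform of an `ℝ≥0∞`-valued function. -/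
def xrayT (n : ℕ) (f : Euc n → ℝ≥0∞) (ω v : Euc n) : ℝ≥0∞ :=
  ∫⁻ s : ℝ, f (v + s • ω)

/-- Squared modulus, valued in `[0,∞]`. -/
def sqe (z : ℂ) : ℝ≥0∞ := (‖z‖₊ : ℝ≥0∞) ^ 2

/-- The Lorentz norm `‖F‖_{L^{q,r}(μ)} = (q ∫₀^∞ λ^r μ{|F|>λ}^{r/q} dλ/λ)^{1/r}`. -/
def lorentzNorm {α : Type*} [MeasurableSpace α] (μ : Measure α) (q r : ℝ)
    (F : α → ℂ) : ℝ≥0∞ :=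
  (ENNReal.ofReal q *
      ∫⁻ l in Set.Ioi (0 : ℝ),
        ENNReal.ofReal l ^ r * μ {x | l < ‖F x‖} ^ (r / q) / ENNReal.ofReal l) ^ (1 / r)

/-!
On a line `v + ℝω` the extension of `g` is the Fourier transform of a measure on `ℝ`, the
push-forward of `e^{i⟨v, ξ⟩} g(ξ) dσ(ξ)` under `ξ ↦ ⟨ω, ξ⟩`. Integrated against a Gaussian, the
square of its modulus becomes a double integral with a positive kernel, so it only grows when the
density is replaced by its modulus `|g|`. Letting the Gaussian tend to `1` bounds the supremum over
`v` by the integral of `|(|g|dσ)^∧|²` over the line `ℝω` through the origin.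

The remaining bound holds with any measurable function `G` in place of `(|g|dσ)^∧`. Moving the
weight to the line measure `|s|^{n/q - 1} ds`, the layer cake formula and Minkowski's inequality
reduce it to indicators of superlevel sets `A`. For those, the bathtub principle on each line
bounds the measure of `{s | sω ∈ A}` by the `1/q`-th power of its `|s|^{n - 1} ds`-measure, and
polar coordinates turn the integral over `ω` into the volume of `A`. Polar coordinates for the
Hausdorff measure are only needed as an inequality, which follows by covering the sphere with the
Lipschitz radial projections of the faces of a cube.
-/

section PowerWeights

variable {E : Type*} [NormedAddCommGroup E] [MeasurableSpace E]

/-- The measure `‖x‖ ^ r dμ(x)`. The density is `∞` at the origin when `r < 0`. -/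
def normRpowMeasure (μ : Measure E) (r : ℝ) : Measure E :=
  μ.withDensity fun x => ‖x‖ₑ ^ r

instance (μ : Measure E) [SFinite μ] (r : ℝ) : SFinite (normRpowMeasure μ r) :=
  inferInstanceAs (SFinite (μ.withDensity _))

lemma normRpowMeasure_apply (μ : Measure E) (r : ℝ) {A : Set E} (hA : MeasurableSet A) :
    normRpowMeasure μ r A = ∫⁻ x in A, ‖x‖ₑ ^ r ∂μ :=
  withDensity_apply _ hA

variable [BorelSpace E]

lemma lintegral_normRpowMeasure (μ : Measure E) (r : ℝ) {f : E → ℝ≥0∞} (hf : Measurable f) :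
    ∫⁻ x, f x ∂(normRpowMeasure μ r) = ∫⁻ x, ‖x‖ₑ ^ r * f x ∂μ := by
  rw [normRpowMeasure, lintegral_withDensity_eq_lintegral_mul _ (by fun_prop) hf]
  rfl

lemma normRpowMeasure_absolutelyContinuous (μ : Measure E) [NullSingletonClass μ] (r t : ℝ) :
    normRpowMeasure μ r ≪ normRpowMeasure μ t := by
  refine (withDensity_absolutelyContinuous _ _).trans
    (withDensity_absolutelyContinuous' (by fun_prop) ?_)
  filter_upwards [μ.ae_ne 0] with x hx
  simp [hx]

lemma normRpowMeasure_le_mul_of_norm_ge (μ : Measure E) {r t R : ℝ} (hrt : r ≤ t) (hR : 0 < R)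
    {A : Set E} (hA : MeasurableSet A) (hAR : ∀ x ∈ A, R ≤ ‖x‖) :
    normRpowMeasure μ r A ≤ ENNReal.ofReal R ^ (r - t) * normRpowMeasure μ t A := by
  rw [normRpowMeasure_apply μ r hA, normRpowMeasure_apply μ t hA,
    ← lintegral_const_mul _ (by fun_prop)]
  refine setLIntegral_mono' hA fun x hx => ?_
  have hx0 : ‖x‖ₑ ≠ 0 := enorm_ne_zero.2 (norm_pos_iff.1 (hR.trans_le (hAR x hx)))
  have hRx : ENNReal.ofReal R ≤ ‖x‖ₑ := by
    rw [← ofReal_norm]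
    exact ENNReal.ofReal_le_ofReal (hAR x hx)
  calc ‖x‖ₑ ^ r = ‖x‖ₑ ^ (r - t) * ‖x‖ₑ ^ t := by
        rw [← ENNReal.rpow_add _ _ hx0 enorm_ne_top, sub_add_cancel]
    _ ≤ ENNReal.ofReal R ^ (r - t) * ‖x‖ₑ ^ t := by
        gcongr ?_ * _
        rw [← neg_sub, ENNReal.rpow_neg, ENNReal.rpow_neg]
        gcongr

variable [NormedSpace ℝ E] [FiniteDimensional ℝ E] (μ : Measure E) [μ.IsAddHaarMeasure]

lemma enorm_pow_finrank_mul_lintegral_comp_smul {f : E → ℝ≥0∞} (hf : Measurable f) {c : ℝ}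
    (hc : c ≠ 0) :
    ‖c‖ₑ ^ Module.finrank ℝ E * ∫⁻ x, f (c • x) ∂μ = ∫⁻ x, f x ∂μ := by
  have hscale : ‖c‖ₑ ^ Module.finrank ℝ E * ENNReal.ofReal |(c ^ Module.finrank ℝ E)⁻¹| = 1 := by
    rw [← Real.enorm_eq_ofReal_abs, enorm_inv (pow_ne_zero _ hc), enorm_pow]
    apply ENNReal.mul_inv_cancel <;> simp [hc]
  rw [← lintegral_map hf (by fun_prop : Measurable fun x : E => c • x),
    Measure.map_addHaar_smul μ hc, lintegral_smul_measure, smul_eq_mul, ← mul_assoc, hscale,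
    one_mul]

lemma enorm_rpow_mul_lintegral_normRpowMeasure_comp_smul (r : ℝ) {f : E → ℝ≥0∞}
    (hf : Measurable f) {c : ℝ} (hc : c ≠ 0) :
    ‖c‖ₑ ^ (r + Module.finrank ℝ E) * ∫⁻ x, f (c • x) ∂(normRpowMeasure μ r) =
      ∫⁻ x, f x ∂(normRpowMeasure μ r) := by
  have hc0 : ‖c‖ₑ ≠ 0 := enorm_ne_zero.2 hc
  rw [lintegral_normRpowMeasure μ r hf, lintegral_normRpowMeasure μ r (by fun_prop),
    ← enorm_pow_finrank_mul_lintegral_comp_smul μ (f := fun x => ‖x‖ₑ ^ r * f x) (by fun_prop) hc,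
    add_comm, ENNReal.rpow_add _ _ hc0 enorm_ne_top, ENNReal.rpow_natCast, mul_assoc,
    ← lintegral_const_mul _ (by fun_prop)]
  simp only [enorm_smul, ENNReal.mul_rpow_of_ne_top enorm_ne_top enorm_ne_top, mul_assoc]

lemma normRpowMeasure_ball_zero (r : ℝ) {R : ℝ} (hR : 0 < R) :
    normRpowMeasure μ r (ball 0 R) =
      ENNReal.ofReal R ^ (r + Module.finrank ℝ E) * normRpowMeasure μ r (ball 0 1) := by
  have hscale := enorm_rpow_mul_lintegral_normRpowMeasure_comp_smul μ r
    (f := (ball 0 R).indicator 1) (measurable_one.indicator measurableSet_ball) hR.ne'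
  have hball (x : E) : (ball (0 : E) R).indicator (1 : E → ℝ≥0∞) (R • x) =
      (ball 0 1).indicator 1 x := by
    have hmem : R • x ∈ ball (0 : E) R ↔ x ∈ ball (0 : E) 1 := by
      rw [mem_ball_zero_iff, mem_ball_zero_iff, norm_smul, Real.norm_of_nonneg hR.le,
        mul_lt_iff_lt_one_right hR]
    by_cases hx : x ∈ ball (0 : E) 1 <;> simp [hmem, hx, Set.indicator]
  simp only [hball, lintegral_indicator_one measurableSet_ball] at hscale
  rw [← hscale, Real.enorm_eq_ofReal hR.le]

lemma normRpowMeasure_le_ball_add {r t R : ℝ} (hrt : r ≤ t) (hR : 0 < R) {A : Set E}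
    (hA : MeasurableSet A) :
    normRpowMeasure μ r A ≤
      ENNReal.ofReal R ^ (r + Module.finrank ℝ E) * normRpowMeasure μ r (ball 0 1) +
        ENNReal.ofReal R ^ (r - t) * normRpowMeasure μ t A := by
  calc normRpowMeasure μ r A
      ≤ normRpowMeasure μ r (ball 0 R) + normRpowMeasure μ r (A \ ball 0 R) :=
        (measure_mono (by simp)).trans (measure_union_le _ _)
    _ ≤ _ := by
        rw [normRpowMeasure_ball_zero μ r hR]
        gcongr
        refine (normRpowMeasure_le_mul_of_norm_ge μ hrt hR (hA.diff measurableSet_ball)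
          (by simp)).trans ?_
        gcongr
        exact Set.sdiff_subset

variable [Nontrivial E]

lemma normRpowMeasure_ball_zero_one_ne_top {r : ℝ} (hr : 0 < r + Module.finrank ℝ E) :
    normRpowMeasure μ r (ball 0 1) ≠ ∞ := by
  have hdim : ((Module.finrank ℝ E - 1 : ℕ) : ℝ) = Module.finrank ℝ E - 1 :=
    Nat.cast_pred Module.finrank_pos
  have hradial : IntegrableOn (fun y : ℝ => y ^ (Module.finrank ℝ E - 1) • y ^ r)
      (Set.Ioo 0 1) := by
    refine ((intervalIntegral.integrableOn_Ioo_rpow_iff one_pos).2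
      (by linarith : -1 < r + Module.finrank ℝ E - 1)).congr_fun (fun y hy => ?_)
      measurableSet_Ioo
    rw [smul_eq_mul, ← Real.rpow_natCast, ← Real.rpow_add hy.1, hdim]
    ring_nf
  have hint := ((integrableOn_fun_norm_addHaar μ).2 hradial).lintegral_lt_top.ne
  rw [normRpowMeasure_apply μ r measurableSet_ball]
  convert hint using 1
  refine lintegral_congr_ae (ae_restrict_of_ae ?_)
  filter_upwards [μ.ae_ne 0] with x hx
  rw [← ENNReal.ofReal_rpow_of_pos (norm_pos_iff.2 hx), ofReal_norm]

lemma exists_normRpowMeasure_le_rpow {d q : ℝ} (hd : 0 < d) (hq : 1 ≤ q) :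
    ∃ C : ℝ≥0, ∀ A : Set E, MeasurableSet A →
      normRpowMeasure μ (d / q - Module.finrank ℝ E) A ≤
        C * normRpowMeasure μ (d - Module.finrank ℝ E) A ^ (1 / q) := by
  set D : ℝ := (Module.finrank ℝ E : ℝ)
  set c := normRpowMeasure μ (d / q - D) (ball 0 1)
  have hq0 : 0 < q := by linarith
  have hc : c ≠ ∞ := normRpowMeasure_ball_zero_one_ne_top μ (by rw [sub_add_cancel]; positivity)
  refine ⟨c.toNNReal + 1, fun A hA => ?_⟩
  rw [ENNReal.coe_add, ENNReal.coe_toNNReal hc, ENNReal.coe_one]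
  set M := normRpowMeasure μ (d - D) A
  rcases eq_or_ne M ∞ with hMtop | hMtop
  · simp [hMtop, hq0]
  rcases eq_or_ne M 0 with hM0 | hM0
  · simp [normRpowMeasure_absolutelyContinuous μ (d / q - D) (d - D) hM0]
  -- The radius balancing the two terms of `normRpowMeasure_le_ball_add` satisfies `R ^ d = M`.
  set R : ℝ := M.toReal ^ (1 / d)
  have hMpos : 0 < M.toReal := ENNReal.toReal_pos hM0 hMtop
  have hofR : ENNReal.ofReal R = M ^ (1 / d) := by
    rw [← ENNReal.ofReal_rpow_of_pos hMpos, ENNReal.ofReal_toReal hMtop]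
  calc normRpowMeasure μ (d / q - D) A
      ≤ ENNReal.ofReal R ^ (d / q - D + D) * c + ENNReal.ofReal R ^ (d / q - D - (d - D)) * M :=
        normRpowMeasure_le_ball_add μ (by linarith [div_le_self hd.le hq]) (by positivity) hA
    _ = M ^ (1 / q) * c + M ^ (1 / d * (d / q - d)) * M ^ (1 : ℝ) := by
        rw [hofR, ← ENNReal.rpow_mul, ← ENNReal.rpow_mul, ENNReal.rpow_one]
        congr 3 <;> field_simp <;> ring
    _ = (c + 1) * M ^ (1 / q) := by
        rw [← ENNReal.rpow_add _ _ hM0 hMtop, add_mul, one_mul, mul_comm c]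
        congr 2
        field_simp
        ring

end PowerWeights

section OscillatoryIntegral

variable {X : Type*} [MeasurableSpace X] {σ : Measure X} {a : X → ℝ} {h : X → ℂ}

/-- The oscillatory integral `∫ e^{i s a(ξ)} h(ξ) dσ(ξ)` with phase `a` and amplitude `h`, that is,
the Fourier transform of the push-forward of `h dσ` under `a`. -/
def oscIntegral (σ : Measure X) (a : X → ℝ) (h : X → ℂ) (s : ℝ) : ℂ :=
  ∫ ξ, Complex.exp (Complex.I * (s * a ξ : ℝ)) * h ξ ∂σ

lemma norm_oscIntegral_le (σ : Measure X) (a : X → ℝ) (h : X → ℂ) (s : ℝ) :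
    ‖oscIntegral σ a h s‖ ≤ ∫ ξ, ‖h ξ‖ ∂σ :=
  (norm_integral_le_integral_norm _).trans_eq <| by
    simp only [norm_mul, Complex.norm_exp_I_mul_ofReal, one_mul]

lemma continuous_oscIntegral (ha : Measurable a) (hh : Integrable h σ) :
    Continuous (oscIntegral σ a h) := by
  refine continuous_of_dominated (bound := fun ξ => ‖h ξ‖) (fun s => ?_) (fun s => ?_) hh.norm ?_
  · exact (Measurable.aestronglyMeasurable (by fun_prop)).mul hh.1
  · simp only [norm_mul, Complex.norm_exp_I_mul_ofReal, one_mul, le_refl, Filter.eventually_true]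
  · exact .of_forall fun ξ => by fun_prop

lemma integrable_gaussian_mul_norm_oscIntegral_sq (ha : Measurable a) (hh : Integrable h σ)
    {b : ℝ} (hb : 0 < b) :
    Integrable fun s : ℝ => rexp (-b * s ^ 2) * ‖oscIntegral σ a h s‖ ^ 2 := by
  refine (integrable_exp_neg_mul_sq hb).mul_bdd (c := (∫ ξ, ‖h ξ‖ ∂σ) ^ 2)
    ((continuous_oscIntegral ha hh).norm.pow 2).aestronglyMeasurable (.of_forall fun s => ?_)
  rw [norm_pow, norm_norm]
  gcongr
  exact norm_oscIntegral_le σ a h s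

lemma lintegral_gaussian_mul_enorm_oscIntegral_sq (ha : Measurable a) (hh : Integrable h σ)
    {b : ℝ} (hb : 0 < b) :
    ∫⁻ s : ℝ, ENNReal.ofReal (rexp (-b * s ^ 2)) * ‖oscIntegral σ a h s‖ₑ ^ 2 =
      ENNReal.ofReal (∫ s : ℝ, rexp (-b * s ^ 2) * ‖oscIntegral σ a h s‖ ^ 2) := by
  rw [ofReal_integral_eq_lintegral_ofReal (integrable_gaussian_mul_norm_oscIntegral_sq ha hh hb)
    (.of_forall fun s => by positivity)]
  refine lintegral_congr fun s => ?_
  rw [ENNReal.ofReal_mul (by positivity), ENNReal.ofReal_pow (norm_nonneg _), ofReal_norm]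

lemma integral_exp_I_mul_gaussian {b : ℝ} (hb : 0 < b) (t : ℝ) :
    ∫ s : ℝ, Complex.exp (Complex.I * (s * t : ℝ)) * (rexp (-b * s ^ 2) : ℂ) =
      (√(π / b) * rexp (-t ^ 2 / (4 * b)) : ℝ) := by
  have hFourier := fourierIntegral_gaussian (b := b) (by simpa using hb) t
  have hsqrt : (√(π / b) : ℂ) = ((π : ℂ) / b) ^ (1 / 2 : ℂ) := by
    rw [Real.sqrt_eq_rpow, Complex.ofReal_cpow (by positivity)]
    push_cast
    rfl
  push_cast
  rw [hsqrt, ← hFourier]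
  refine integral_congr_ae (.of_forall fun s => ?_)
  simp only [mul_comm (s : ℂ) t, mul_assoc]

variable [SFinite σ]

lemma norm_oscIntegral_sq_eq (a : X → ℝ) (h : X → ℂ) (s : ℝ) :
    ((‖oscIntegral σ a h s‖ ^ 2 : ℝ) : ℂ) =
      ∫ z, Complex.exp (Complex.I * (s * (a z.1 - a z.2) : ℝ)) *
        (h z.1 * (starRingEnd ℂ) (h z.2)) ∂(σ.prod σ) := by
  push_cast
  rw [← Complex.mul_conj', oscIntegral, ← integral_conj, ← integral_prod_mul]
  refine integral_congr_ae (.of_forall fun z => ?_)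
  have hphase : Complex.exp (Complex.I * (s * (a z.1 - a z.2))) =
      Complex.exp (Complex.I * (s * a z.1)) * Complex.exp (-Complex.I * (s * a z.2)) := by
    rw [← Complex.exp_add]
    ring_nf
  simp only [map_mul, ← Complex.exp_conj, Complex.conj_I, Complex.conj_ofReal, hphase,
    Complex.ofReal_mul]
  ring

lemma integral_gaussian_mul_norm_oscIntegral_sq (ha : Measurable a) (hh : Integrable h σ)
    {b : ℝ} (hb : 0 < b) :
    ((∫ s : ℝ, rexp (-b * s ^ 2) * ‖oscIntegral σ a h s‖ ^ 2 : ℝ) : ℂ) =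
      ∫ z, ((√(π / b) * rexp (-(a z.1 - a z.2) ^ 2 / (4 * b)) : ℝ) : ℂ) *
        (h z.1 * (starRingEnd ℂ) (h z.2)) ∂(σ.prod σ) := by
  have hconj : Integrable (fun x => (starRingEnd ℂ) (h x)) σ :=
    hh.congr' (Complex.continuous_conj.comp_aestronglyMeasurable hh.1) (by simp)
  have hgauss : Integrable (fun s : ℝ => (rexp (-b * s ^ 2) : ℂ)) :=
    (integrable_exp_neg_mul_sq hb).ofReal
  have hFubini : Integrable (Function.uncurry fun (s : ℝ) (z : X × X) =>
      Complex.exp (Complex.I * (s * (a z.1 - a z.2) : ℝ)) *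
        ((rexp (-b * s ^ 2) : ℂ) * (h z.1 * (starRingEnd ℂ) (h z.2))))
      (volume.prod (σ.prod σ)) :=
    (hgauss.mul_prod (hh.mul_prod hconj)).bdd_mul (c := 1)
      (Measurable.aestronglyMeasurable (by fun_prop))
      (.of_forall fun z => (Complex.norm_exp_I_mul_ofReal _).le)
  calc ((∫ s : ℝ, rexp (-b * s ^ 2) * ‖oscIntegral σ a h s‖ ^ 2 : ℝ) : ℂ)
      = ∫ s : ℝ, ∫ z, Complex.exp (Complex.I * (s * (a z.1 - a z.2) : ℝ)) *
          ((rexp (-b * s ^ 2) : ℂ) * (h z.1 * (starRingEnd ℂ) (h z.2))) ∂(σ.prod σ) := by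
        rw [← integral_complex_ofReal]
        refine integral_congr_ae (.of_forall fun s => ?_)
        simp only [Complex.ofReal_mul (rexp _), norm_oscIntegral_sq_eq, ← integral_const_mul,
          mul_left_comm (rexp _ : ℂ)]
    _ = _ := by
        rw [integral_integral_swap hFubini]
        simp only [← mul_assoc, ← integral_exp_I_mul_gaussian hb, ← integral_mul_const]

-- The Gaussian kernel of `integral_gaussian_mul_norm_oscIntegral_sq` is positive, so replacing
-- `h` by `‖h‖` only increases the double integral.
lemma integral_gaussian_mul_norm_oscIntegral_sq_le (ha : Measurable a) (hh : Integrable h σ)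
    {b : ℝ} (hb : 0 < b) :
    ∫ s : ℝ, rexp (-b * s ^ 2) * ‖oscIntegral σ a h s‖ ^ 2 ≤
      ∫ s : ℝ, rexp (-b * s ^ 2) * ‖oscIntegral σ a (fun ξ => (‖h ξ‖ : ℂ)) s‖ ^ 2 := by
  have hh_eq := integral_gaussian_mul_norm_oscIntegral_sq ha hh hb
  have hnorm : Integrable (fun ξ => (‖h ξ‖ : ℂ)) σ := hh.norm.ofReal
  have hnorm_eq := integral_gaussian_mul_norm_oscIntegral_sq ha hnorm hb
  set J := ∫ s : ℝ, rexp (-b * s ^ 2) * ‖oscIntegral σ a h s‖ ^ 2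
  have hkernel (z : X × X) : ((√(π / b) * rexp (-(a z.1 - a z.2) ^ 2 / (4 * b)) : ℝ) : ℂ) *
        ((‖h z.1‖ : ℂ) * (starRingEnd ℂ) (‖h z.2‖ : ℂ)) =
      ((‖((√(π / b) * rexp (-(a z.1 - a z.2) ^ 2 / (4 * b)) : ℝ) : ℂ) *
        (h z.1 * (starRingEnd ℂ) (h z.2))‖ : ℝ) : ℂ) := by
    rw [norm_mul, norm_mul, Complex.norm_real, Real.norm_of_nonneg (by positivity),
      Complex.conj_ofReal, RCLike.norm_conj]
    push_cast
    rfl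
  simp only [hkernel] at hnorm_eq
  rw [integral_complex_ofReal, Complex.ofReal_inj] at hnorm_eq
  calc J ≤ ‖(J : ℂ)‖ := by rw [Complex.norm_real]; exact le_abs_self _
    _ ≤ _ := by rw [hh_eq, hnorm_eq]; exact norm_integral_le_integral_norm _

lemma lintegral_le_of_forall_lintegral_gaussian_mul_le {f : ℝ → ℝ≥0∞} (hf : Measurable f)
    {M : ℝ≥0∞}
    (hM : ∀ b : ℝ, 0 < b → ∫⁻ s : ℝ, ENNReal.ofReal (rexp (-b * s ^ 2)) * f s ≤ M) :
    ∫⁻ s, f s ≤ M := by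
  have hlim (s : ℝ) : Filter.Tendsto
      (fun k : ℕ => ENNReal.ofReal (rexp (-(1 / ((k : ℝ) + 1)) * s ^ 2)) * f s)
      Filter.atTop (nhds (f s)) := by
    have hexp := (Real.continuous_exp.tendsto _).comp
      ((tendsto_one_div_add_atTop_nhds_zero_nat (𝕜 := ℝ)).neg.mul_const (s ^ 2))
    simpa using ENNReal.Tendsto.mul_const (b := f s) (ENNReal.tendsto_ofReal hexp) (by simp)
  calc ∫⁻ s, f s
      = ∫⁻ s, Filter.liminf
          (fun k : ℕ => ENNReal.ofReal (rexp (-(1 / ((k : ℝ) + 1)) * s ^ 2)) * f s)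
          Filter.atTop := by simp only [(hlim _).liminf_eq]
    _ ≤ Filter.liminf (fun k : ℕ =>
          ∫⁻ s : ℝ, ENNReal.ofReal (rexp (-(1 / ((k : ℝ) + 1)) * s ^ 2)) * f s) Filter.atTop :=
        lintegral_liminf_le fun k => by fun_prop
    _ ≤ M := Filter.liminf_le_of_le (by isBoundedDefault) fun c hc =>
        let ⟨_, hk⟩ := hc.exists
        hk.trans (hM _ (by positivity))

theorem lintegral_enorm_oscIntegral_sq_le (ha : Measurable a) (hh : Integrable h σ) :
    ∫⁻ s, ‖oscIntegral σ a h s‖ₑ ^ 2 ≤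
      ∫⁻ s, ‖oscIntegral σ a (fun ξ => (‖h ξ‖ : ℂ)) s‖ₑ ^ 2 := by
  have hmeas := (continuous_oscIntegral ha hh).measurable
  have hnorm : Integrable (fun ξ => (‖h ξ‖ : ℂ)) σ := hh.norm.ofReal
  refine lintegral_le_of_forall_lintegral_gaussian_mul_le (by fun_prop) fun b hb => ?_
  calc ∫⁻ s, ENNReal.ofReal (rexp (-b * s ^ 2)) * ‖oscIntegral σ a h s‖ₑ ^ 2
      ≤ ∫⁻ s, ENNReal.ofReal (rexp (-b * s ^ 2)) *
          ‖oscIntegral σ a (fun ξ => (‖h ξ‖ : ℂ)) s‖ₑ ^ 2 := by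
        rw [lintegral_gaussian_mul_enorm_oscIntegral_sq ha hh hb,
          lintegral_gaussian_mul_enorm_oscIntegral_sq ha hnorm hb]
        exact ENNReal.ofReal_le_ofReal (integral_gaussian_mul_norm_oscIntegral_sq_le ha hh hb)
    _ ≤ _ := lintegral_mono fun s => mul_le_of_le_one_left' <| by
        rw [ENNReal.ofReal_le_one, Real.exp_le_one_iff]
        nlinarith [sq_nonneg s]

end OscillatoryIntegral

section Minkowski

variable {α β : Type*} [MeasurableSpace α] [MeasurableSpace β] {μ : Measure α} {ν : Measure β}

lemma lintegral_le_of_forall_measurable_le [SigmaFinite ν] {f : β → ℝ≥0∞} {M : ℝ≥0∞}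
    (hM : ∀ φ : β → ℝ≥0∞, Measurable φ → φ ≤ f → ∫⁻ b, φ b ∂ν ≠ ∞ → ∫⁻ b, φ b ∂ν ≤ M) :
    ∫⁻ b, f b ∂ν ≤ M := by
  rw [lintegral_eq_nnreal]
  refine iSup₂_le fun ψ hψ => le_of_forall_lt fun L hL => ?_
  rw [← SimpleFunc.lintegral_eq_lintegral] at hL
  obtain ⟨φ, hφψ, hφtop, hLφ⟩ := SimpleFunc.exists_lt_lintegral_simpleFunc_of_lt_lintegral hL
  exact hLφ.trans_le <| hM (fun b => φ b) (by fun_prop)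
    (fun b => (ENNReal.coe_le_coe.2 (hφψ b)).trans (hψ b)) hφtop.ne

variable [SFinite μ] {q : ℝ} {f : α → β → ℝ≥0∞}

lemma lintegral_lintegral_mul_le_lintegral_Lp_mul_Lq [SFinite ν] {p : ℝ}
    (hpq : q.HolderConjugate p) (hf : Measurable (Function.uncurry f)) {ψ : β → ℝ≥0∞}
    (hψ : Measurable ψ) (hψ_top : ∫⁻ b, ψ b ^ p ∂ν ≠ ∞) :
    ∫⁻ b, (∫⁻ a, f a b ∂μ) * ψ b ∂ν ≤
      (∫⁻ a, (∫⁻ b, f a b ^ q ∂ν) ^ (1 / q) ∂μ) * (∫⁻ b, ψ b ^ p ∂ν) ^ (1 / p) := by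
  have hf_swap : Measurable fun z : β × α => f z.2 z.1 := hf.comp measurable_swap
  calc ∫⁻ b, (∫⁻ a, f a b ∂μ) * ψ b ∂ν
      = ∫⁻ b, ∫⁻ a, f a b * ψ b ∂μ ∂ν := by
        simp only [lintegral_mul_const _ hf.of_uncurry_right]
    _ = ∫⁻ a, ∫⁻ b, f a b * ψ b ∂ν ∂μ :=
        lintegral_lintegral_swap (hf_swap.mul (hψ.comp measurable_fst)).aemeasurable
    _ ≤ ∫⁻ a, (∫⁻ b, f a b ^ q ∂ν) ^ (1 / q) * (∫⁻ b, ψ b ^ p ∂ν) ^ (1 / p) ∂μ :=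
        lintegral_mono fun a => ENNReal.lintegral_mul_le_Lp_mul_Lq ν hpq
          hf.of_uncurry_left.aemeasurable hψ.aemeasurable
    _ = _ := lintegral_mul_const' _ _
        (ENNReal.rpow_ne_top_of_nonneg hpq.symm.one_div_nonneg hψ_top)

lemma lintegral_rpow_le_of_le_lintegral [SFinite ν] (hq : 1 < q)
    (hf : Measurable (Function.uncurry f)) {φ : β → ℝ≥0∞} (hφ : Measurable φ)
    (hφf : ∀ b, φ b ≤ ∫⁻ a, f a b ∂μ) (hφ_top : ∫⁻ b, φ b ^ q ∂ν ≠ ∞) :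
    (∫⁻ b, φ b ^ q ∂ν) ^ (1 / q) ≤ ∫⁻ a, (∫⁻ b, f a b ^ q ∂ν) ^ (1 / q) ∂μ := by
  have hpq := Real.HolderConjugate.conjExponent hq
  set p := q.conjExponent
  set T := ∫⁻ b, φ b ^ q ∂ν
  have hφp (b : β) : (φ b ^ (q - 1)) ^ p = φ b ^ q := by
    rw [← ENNReal.rpow_mul, hpq.sub_one_mul_conj]
  rcases eq_or_ne T 0 with hT0 | hT0
  · simp [hT0, hpq.pos]
  have hTp0 : T ^ (1 / p) ≠ 0 := by simp [hT0, hφ_top]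
  have hTp_top : T ^ (1 / p) ≠ ∞ :=
    ENNReal.rpow_ne_top_of_nonneg hpq.symm.one_div_nonneg hφ_top
  refine (ENNReal.mul_le_mul_iff_left hTp0 hTp_top).1 ?_
  calc T ^ (1 / q) * T ^ (1 / p) = ∫⁻ b, φ b ^ q ∂ν := by
        rw [← ENNReal.rpow_add _ _ hT0 hφ_top, one_div, one_div, hpq.inv_add_inv_eq_one,
          ENNReal.rpow_one]
    _ = ∫⁻ b, φ b * φ b ^ (q - 1) ∂ν := by
        refine lintegral_congr fun b => ?_
        rw [← add_sub_cancel 1 q, ENNReal.rpow_add_of_nonneg _ _ zero_le_one hpq.sub_one_pos.le,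
          ENNReal.rpow_one, add_sub_cancel]
    _ ≤ ∫⁻ b, (∫⁻ a, f a b ∂μ) * φ b ^ (q - 1) ∂ν := by
        gcongr with b
        exact hφf b
    _ ≤ _ := by
        simpa only [hφp] using lintegral_lintegral_mul_le_lintegral_Lp_mul_Lq (μ := μ) hpq hf
          (hφ.pow_const (q - 1)) (by simpa only [hφp] using hφ_top)

theorem lintegral_rpow_lintegral_le [SigmaFinite ν] (hq : 1 ≤ q)
    (hf : Measurable (Function.uncurry f)) :
    (∫⁻ b, (∫⁻ a, f a b ∂μ) ^ q ∂ν) ^ (1 / q) ≤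
      ∫⁻ a, (∫⁻ b, f a b ^ q ∂ν) ^ (1 / q) ∂μ := by
  rcases hq.eq_or_lt with rfl | hq1
  · simpa only [ENNReal.rpow_one, div_one] using
      (lintegral_lintegral_swap hf.aemeasurable).ge
  have hq0 : 0 < q := by linarith
  rw [one_div, ENNReal.rpow_inv_le_iff hq0]
  refine lintegral_le_of_forall_measurable_le fun ψ hψ hψf hψ_top => ?_
  have hroot (b : β) : (ψ b ^ q⁻¹) ^ q = ψ b := ENNReal.rpow_inv_rpow hq0.ne' _
  rw [← ENNReal.rpow_inv_le_iff hq0, ← one_div]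
  simpa only [hroot] using lintegral_rpow_le_of_le_lintegral hq1 hf (hψ.pow_const q⁻¹)
    (fun b => (ENNReal.rpow_inv_le_iff hq0).2 (hψf b)) (by simpa only [hroot] using hψ_top)

end Minkowski

section Lorentz

variable {α β X : Type*} [MeasurableSpace α] [MeasurableSpace β] [MeasurableSpace X]

lemma lorentzNorm_rpow (μ : Measure X) {p q : ℝ} (hp : 0 < p) (F : X → ℂ) :
    lorentzNorm μ (p * q) p F ^ p =
      ENNReal.ofReal (p * q) * ∫⁻ l in Set.Ioi (0 : ℝ),
        ENNReal.ofReal (l ^ (p - 1)) * μ {x | l < ‖F x‖} ^ (1 / q) := by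
  rw [lorentzNorm, one_div, ENNReal.rpow_inv_rpow hp.ne']
  congr 1
  refine setLIntegral_congr_fun measurableSet_Ioi fun l hl => ?_
  have hl0 : ENNReal.ofReal l ≠ 0 := by simpa using hl
  rw [div_mul_cancel_left₀ hp.ne', one_div, ENNReal.mul_div_right_comm,
    ← ENNReal.ofReal_rpow_of_pos hl, ENNReal.rpow_sub _ _ hl0 ENNReal.ofReal_ne_top,
    ENNReal.rpow_one]

lemma lintegral_enorm_rpow_eq_lintegral_meas_lt (ν : Measure β) {p : ℝ} (hp : 0 < p) {F : β → ℂ}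
    (hF : Measurable F) :
    ∫⁻ s, ‖F s‖ₑ ^ p ∂ν =
      ∫⁻ l in Set.Ioi (0 : ℝ), ENNReal.ofReal (p * l ^ (p - 1)) * ν {s | l < ‖F s‖} := by
  have hlayer := lintegral_rpow_eq_lintegral_meas_lt_mul ν (f := fun s => ‖F s‖)
    (.of_forall fun s => norm_nonneg _) (by fun_prop) hp
  simp only [← ENNReal.ofReal_rpow_of_nonneg (norm_nonneg _) hp.le, ofReal_norm] at hlayer
  rw [hlayer, ← lintegral_const_mul' _ _ ENNReal.ofReal_ne_top]
  simp only [ENNReal.ofReal_mul hp.le, mul_assoc, mul_comm (ν _)]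

lemma rpow_lintegral_const_mul_rpow (σ : Measure α) {q : ℝ} (hq : 0 < q) {c : ℝ≥0∞}
    (hc : c ≠ ∞) (f : α → ℝ≥0∞) :
    (∫⁻ ω, (c * f ω) ^ q ∂σ) ^ (1 / q) = c * (∫⁻ ω, f ω ^ q ∂σ) ^ (1 / q) := by
  simp only [ENNReal.mul_rpow_of_nonneg _ _ hq.le]
  rw [lintegral_const_mul' _ _ (ENNReal.rpow_ne_top_of_nonneg hq.le hc),
    ENNReal.mul_rpow_of_nonneg _ _ (by positivity), one_div, ENNReal.rpow_rpow_inv hq.ne']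

variable {σ : Measure α} [SigmaFinite σ] {ν : Measure β} [SFinite ν] {μ : Measure X}

-- Layer cake and Minkowski's inequality in `L^q(σ)` reduce the bound to superlevel sets of `F`.
theorem lintegral_rpow_comp_le_lorentzNorm {p q : ℝ} (hp : 0 < p) (hq : 1 ≤ q)
    {Φ : α → β → X} (hΦ : Measurable (Function.uncurry Φ)) {C : ℝ≥0}
    (hC : ∀ A : Set X, MeasurableSet A →
      (∫⁻ ω, ν {s | Φ ω s ∈ A} ^ q ∂σ) ^ (1 / q) ≤ C * μ A ^ (1 / q))
    {F : X → ℂ} (hF : Measurable F) :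
    (∫⁻ ω, (∫⁻ s, ‖F (Φ ω s)‖ₑ ^ p ∂ν) ^ q ∂σ) ^ (1 / q) ≤
      C * lorentzNorm μ (p * q) p F ^ p := by
  have hq0 : 0 < q := by linarith
  have hlevel : Measurable fun z : ℝ × α => ν {s | z.1 < ‖F (Φ z.2 s)‖} :=
    measurable_measure_prodMk_left (s := {z : (ℝ × α) × β | z.1.1 < ‖F (Φ z.1.2 z.2)‖})
      (measurableSet_lt (by fun_prop)
        (hF.comp (hΦ.comp (by fun_prop : Measurable fun z : (ℝ × α) × β => (z.1.2, z.2)))).norm)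
  have hmink := lintegral_rpow_lintegral_le (μ := volume.restrict (Set.Ioi (0 : ℝ))) (ν := σ)
    (f := fun l ω => ENNReal.ofReal (p * l ^ (p - 1)) * ν {s | l < ‖F (Φ ω s)‖}) hq
    (Measurable.mul (by fun_prop) hlevel)
  have hlayer (ω : α) := lintegral_enorm_rpow_eq_lintegral_meas_lt ν hp (F := fun s => F (Φ ω s))
    (hF.comp hΦ.of_uncurry_left)
  simp only [hlayer]
  refine hmink.trans ?_
  calc ∫⁻ l in Set.Ioi (0 : ℝ), (∫⁻ ω, (ENNReal.ofReal (p * l ^ (p - 1)) *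
          ν {s | l < ‖F (Φ ω s)‖}) ^ q ∂σ) ^ (1 / q)
      = ∫⁻ l in Set.Ioi (0 : ℝ), ENNReal.ofReal (p * l ^ (p - 1)) *
          (∫⁻ ω, ν {s | l < ‖F (Φ ω s)‖} ^ q ∂σ) ^ (1 / q) := by
        simp only [rpow_lintegral_const_mul_rpow σ hq0 ENNReal.ofReal_ne_top]
    _ ≤ ∫⁻ l in Set.Ioi (0 : ℝ), ENNReal.ofReal (p * l ^ (p - 1)) *
          (C * μ {x | l < ‖F x‖} ^ (1 / q)) := by
        gcongr with l
        exact hC {x | l < ‖F x‖} (measurableSet_lt measurable_const hF.norm)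
    _ = C * (ENNReal.ofReal p * ∫⁻ l in Set.Ioi (0 : ℝ),
          ENNReal.ofReal (l ^ (p - 1)) * μ {x | l < ‖F x‖} ^ (1 / q)) := by
        rw [← lintegral_const_mul' _ _ ENNReal.ofReal_ne_top,
          ← lintegral_const_mul' _ _ ENNReal.coe_ne_top]
        simp only [ENNReal.ofReal_mul hp.le, mul_assoc, mul_left_comm (C : ℝ≥0∞)]
    _ ≤ C * lorentzNorm μ (p * q) p F ^ p := by
        rw [lorentzNorm_rpow μ hp]
        gcongr
        exact le_mul_of_one_le_right hp.le hq

end Lorentz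

section SphereCharts

open NormedSpace (normalize norm_smul_normalize norm_normalize_eq_one_iff normalize_smul_of_pos
  normalize_smul_of_neg normalize_eq_self_of_norm_eq_one)

lemma norm_mul_norm_normalize_sub_le {V : Type*} [NormedAddCommGroup V] [NormedSpace ℝ V]
    (x y : V) : ‖x‖ * ‖normalize x - normalize y‖ ≤ 2 * ‖x - y‖ := by
  have hdecomp : ‖x‖ • (normalize x - normalize y) = (x - y) + (‖y‖ - ‖x‖) • normalize y := by
    rw [smul_sub, sub_smul, norm_smul_normalize, norm_smul_normalize]
    abel
  have hy : ‖normalize y‖ ≤ 1 := by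
    rcases eq_or_ne y 0 with rfl | hy
    · simp
    · exact (norm_normalize_eq_one_iff.2 hy).le
  calc ‖x‖ * ‖normalize x - normalize y‖ = ‖(x - y) + (‖y‖ - ‖x‖) • normalize y‖ := by
        rw [← hdecomp, norm_smul, norm_norm]
    _ ≤ ‖x - y‖ + |‖y‖ - ‖x‖| * ‖normalize y‖ := by
        rw [← Real.norm_eq_abs, ← norm_smul]
        exact norm_add_le _ _
    _ ≤ ‖x - y‖ + ‖y - x‖ * 1 := by
        gcongr
        exact abs_norm_sub_norm_le y x
    _ = 2 * ‖x - y‖ := by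
        rw [norm_sub_rev y x]
        ring

variable {m : ℕ}

/-- The affine parametrisation of the hyperplane `x i = 1`. The sup-norm unit ball is mapped onto
a face of the cube `[-1, 1] ^ (m + 1)`. -/
def cubeFace (i : Fin (m + 1)) (y : Fin m → ℝ) : Euc (m + 1) :=
  WithLp.toLp 2 (i.insertNth 1 y)

@[simp] lemma cubeFace_apply_same (i : Fin (m + 1)) (y : Fin m → ℝ) : cubeFace i y i = 1 := by
  simp [cubeFace]

@[simp] lemma cubeFace_apply_succAbove (i : Fin (m + 1)) (y : Fin m → ℝ) (j : Fin m) :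
    cubeFace i y (i.succAbove j) = y j := by
  simp [cubeFace]

lemma smul_cubeFace (i : Fin (m + 1)) (t : ℝ) (y : Fin m → ℝ) :
    t • cubeFace i y = WithLp.toLp 2 (i.insertNth t (t • y)) := by
  ext j
  cases j using Fin.succAboveCases i <;> simp

lemma one_le_norm_cubeFace (i : Fin (m + 1)) (y : Fin m → ℝ) : 1 ≤ ‖cubeFace i y‖ := by
  simpa using PiLp.norm_apply_le (cubeFace i y) i

lemma norm_cubeFace_le (i : Fin (m + 1)) {y : Fin m → ℝ} (hy : ‖y‖ ≤ 1) :
    ‖cubeFace i y‖ ≤ √(m + 1) := by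
  rw [EuclideanSpace.norm_eq, Fin.sum_univ_succAbove _ i, add_comm]
  gcongr
  · calc ∑ j, ‖cubeFace i y (i.succAbove j)‖ ^ 2 ≤ ∑ _j : Fin m, (1 : ℝ) := by
          gcongr with j
          rw [cubeFace_apply_succAbove]
          exact pow_le_one₀ (norm_nonneg _) ((norm_le_pi_norm y j).trans hy)
      _ = m := by simp
  · simp

lemma lipschitzWith_cubeFace (i : Fin (m + 1)) :
    LipschitzWith (NNReal.sqrt (m + 1)) (cubeFace i) := by
  have hinsert : LipschitzWith 1 fun y : Fin m → ℝ => (i.insertNth 1 y : Fin (m + 1) → ℝ) :=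
    LipschitzWith.of_dist_le_mul fun y z => by simp [Fin.dist_insertNth_insertNth]
  have hcomp : LipschitzWith _ (cubeFace i) :=
    (PiLp.lipschitzWith_toLp 2 (fun _ : Fin (m + 1) => ℝ)).comp hinsert
  simpa [NNReal.sqrt_eq_rpow] using hcomp

@[fun_prop]
lemma measurable_cubeFace (i : Fin (m + 1)) : Measurable (cubeFace i) :=
  (lipschitzWith_cubeFace i).continuous.measurable

/-- The radial projection onto the unit sphere of the hyperplane `x i = e`, where `p = (i, e)` and
`e` is a sign. The images of the sup-norm unit ball under these `2 (m + 1)` charts cover the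
sphere. -/
def sphereChart (p : Fin (m + 1) × ℤˣ) (y : Fin m → ℝ) : Euc (m + 1) :=
  (p.2 : ℤ) • normalize (cubeFace p.1 y)

lemma lipschitzWith_sphereChart (p : Fin (m + 1) × ℤˣ) :
    LipschitzWith (2 * NNReal.sqrt (m + 1)) (sphereChart p) := by
  refine LipschitzWith.of_dist_le_mul fun y z => ?_
  have hsign : dist (sphereChart p y) (sphereChart p z) =
      ‖normalize (cubeFace p.1 y) - normalize (cubeFace p.1 z)‖ := by
    rw [dist_eq_norm, sphereChart, sphereChart, ← smul_sub]
    rcases Int.units_eq_one_or p.2 with h | h <;> simp [h, norm_sub_rev]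
  calc dist (sphereChart p y) (sphereChart p z)
      ≤ ‖cubeFace p.1 y‖ * ‖normalize (cubeFace p.1 y) - normalize (cubeFace p.1 z)‖ := by
        rw [hsign]
        exact le_mul_of_one_le_left (norm_nonneg _) (one_le_norm_cubeFace p.1 y)
    _ ≤ 2 * dist (cubeFace p.1 y) (cubeFace p.1 z) := by
        rw [dist_eq_norm]
        exact norm_mul_norm_normalize_sub_le _ _
    _ ≤ 2 * (NNReal.sqrt (m + 1) * dist y z) := by
        gcongr
        exact (lipschitzWith_cubeFace p.1).dist_le_mul y z
    _ = _ := by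
        push_cast
        ring

lemma measurable_sphereChart (p : Fin (m + 1) × ℤˣ) : Measurable (sphereChart p) :=
  (lipschitzWith_sphereChart p).continuous.measurable

-- Divide by a coordinate of largest modulus.
lemma exists_sphereChart_eq {ω : Euc (m + 1)} (hω : ‖ω‖ = 1) :
    ∃ p, ∃ y ∈ closedBall (0 : Fin m → ℝ) 1, sphereChart p y = ω := by
  obtain ⟨i, hi⟩ := Finite.exists_max fun i => ‖ω i‖
  have hωi : ω i ≠ 0 := fun h => by
    have hzero : ω = 0 := PiLp.ext fun j => by simpa [h] using hi j
    simp [hzero] at hω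
  have hface : cubeFace i (fun j => (ω i)⁻¹ * ω (i.succAbove j)) = (ω i)⁻¹ • ω := by
    ext j
    cases j using Fin.succAboveCases i <;> simp [hωi]
  have hball : (fun j => (ω i)⁻¹ * ω (i.succAbove j)) ∈ closedBall (0 : Fin m → ℝ) 1 := by
    rw [mem_closedBall_zero_iff, pi_norm_le_iff_of_nonneg zero_le_one]
    intro j
    rw [norm_mul, norm_inv, inv_mul_le_one₀ (norm_pos_iff.2 hωi)]
    exact hi _
  rcases hωi.lt_or_gt with hneg | hpos
  · refine ⟨(i, -1), _, hball, ?_⟩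
    rw [sphereChart, hface, normalize_smul_of_neg (inv_lt_zero.2 hneg),
      normalize_eq_self_of_norm_eq_one hω]
    simp
  · refine ⟨(i, 1), _, hball, ?_⟩
    rw [sphereChart, hface, normalize_smul_of_pos (inv_pos.2 hpos),
      normalize_eq_self_of_norm_eq_one hω]
    simp

lemma sphMeasure_le_sum_map_sphereChart (m : ℕ) :
    sphMeasure (m + 1) ≤ ((2 * NNReal.sqrt (m + 1)) ^ m : ℝ≥0) •
      ∑ p : Fin (m + 1) × ℤˣ,
        (volume.restrict (closedBall (0 : Fin m → ℝ) 1)).map (sphereChart p) := by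
  refine Measure.le_iff.2 fun A hA => ?_
  have hcover : A ∩ sphere (0 : Euc (m + 1)) 1 ⊆
      ⋃ p, sphereChart p '' (sphereChart p ⁻¹' A ∩ closedBall 0 1) := by
    rintro ω ⟨hωA, hω⟩
    obtain ⟨p, y, hy, rfl⟩ := exists_sphereChart_eq (mem_sphere_zero_iff_norm.1 hω)
    exact Set.mem_iUnion.2 ⟨p, y, ⟨hωA, hy⟩, rfl⟩
  have hdim : ((m + 1 : ℕ) : ℝ) - 1 = (Fintype.card (Fin m) : ℝ) := by simp
  rw [sphMeasure, Measure.restrict_apply hA, Measure.smul_apply, Measure.finsetSum_apply,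
    Finset.smul_sum, hdim]
  refine (measure_mono hcover).trans ((measure_iUnion_le _).trans ?_)
  rw [tsum_fintype]
  gcongr with p
  have hp := measurable_sphereChart p
  rw [Measure.map_apply hp hA, Measure.restrict_apply (hp hA)]
  refine ((lipschitzWith_sphereChart p).hausdorffMeasure_image_le (Nat.cast_nonneg _) _).trans ?_
  rw [hausdorffMeasure_pi_real]
  simp [ENNReal.smul_def]

instance (n : ℕ) : IsFiniteMeasure (sphMeasure n) := by
  cases n with
  | zero => exact ⟨by simp [sphMeasure, sphere_eq_empty_of_subsingleton]⟩
  | succ m =>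
    have : IsFiniteMeasure (volume.restrict (closedBall (0 : Fin m → ℝ) 1)) :=
      isFiniteMeasure_restrict.2 measure_closedBall_lt_top.ne
    exact isFiniteMeasure_of_le _ (sphMeasure_le_sum_map_sphereChart m)

lemma lintegral_euclidean_insertNth (i : Fin (m + 1)) {f : Euc (m + 1) → ℝ≥0∞}
    (hf : Measurable f) :
    ∫⁻ x, f x = ∫⁻ t : ℝ, ∫⁻ z : Fin m → ℝ, f (WithLp.toLp 2 (i.insertNth t z)) := by
  rw [← (PiLp.volume_preserving_toLp (Fin (m + 1))).lintegral_comp hf,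
    ← (volume_preserving_piFinSuccAbove (fun _ : Fin (m + 1) => ℝ) i).symm.lintegral_comp
      (by fun_prop),
    Measure.volume_eq_prod, lintegral_prod _ (Measurable.aemeasurable (by fun_prop))]
  rfl

lemma lintegral_lintegral_smul_cubeFace (i : Fin (m + 1)) {f : Euc (m + 1) → ℝ≥0∞}
    (hf : Measurable f) :
    ∫⁻ y, ∫⁻ t : ℝ, f (t • cubeFace i y) ∂(normRpowMeasure volume m) = ∫⁻ x, f x := by
  have hmeas : Measurable fun z : ℝ × (Fin m → ℝ) => f (z.1 • cubeFace i z.2) := by fun_prop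
  rw [lintegral_lintegral_swap (f := fun y t => f (t • cubeFace i y))
      (hmeas.comp measurable_swap).aemeasurable,
    lintegral_normRpowMeasure _ _ hmeas.lintegral_prod_right', lintegral_euclidean_insertNth i hf]
  refine lintegral_congr_ae ?_
  filter_upwards [volume.ae_ne (0 : ℝ)] with t ht
  have hinsert : Measurable fun z : Fin m → ℝ => (i.insertNth t z : Fin (m + 1) → ℝ) :=
    (continuous_const.finInsertNth i continuous_id).measurable
  have hscale := enorm_pow_finrank_mul_lintegral_comp_smul (volume : Measure (Fin m → ℝ))
    (f := fun z => f (WithLp.toLp 2 (i.insertNth t z))) (by fun_prop) ht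
  simpa only [smul_cubeFace, ENNReal.rpow_natCast, Module.finrank_fin_fun] using hscale

lemma lintegral_smul_sphereChart (p : Fin (m + 1) × ℤˣ) (y : Fin m → ℝ)
    {f : Euc (m + 1) → ℝ≥0∞} (hf : Measurable f) :
    ∫⁻ s : ℝ, f (s • sphereChart p y) ∂(normRpowMeasure volume m) =
      ‖cubeFace p.1 y‖ₑ ^ (m + 1) *
        ∫⁻ t : ℝ, f (t • cubeFace p.1 y) ∂(normRpowMeasure volume m) := by
  set x := cubeFace p.1 y
  have hx : 0 < ‖x‖ := one_pos.trans_le (one_le_norm_cubeFace p.1 y)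
  have hc : ‖((p.2 : ℤ) : ℝ) * ‖x‖‖ₑ = ‖x‖ₑ ∧ ((p.2 : ℤ) : ℝ) * ‖x‖ ≠ 0 ∧
      (((p.2 : ℤ) : ℝ) * ‖x‖) • sphereChart p y = x := by
    rcases Int.units_eq_one_or p.2 with h | h <;>
      simp [h, sphereChart, x, norm_smul_normalize, hx.ne']
  obtain ⟨hc_norm, hc0, hcx⟩ := hc
  rw [← enorm_rpow_mul_lintegral_normRpowMeasure_comp_smul volume m (by fun_prop) hc0, hc_norm,
    Module.finrank_self, ← Nat.cast_add, ENNReal.rpow_natCast]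
  simp only [smul_assoc, smul_comm _ _ (sphereChart p y), hcx]

lemma setLIntegral_lintegral_smul_sphereChart_le (p : Fin (m + 1) × ℤˣ)
    {f : Euc (m + 1) → ℝ≥0∞} (hf : Measurable f) :
    ∫⁻ y in closedBall (0 : Fin m → ℝ) 1,
        ∫⁻ s : ℝ, f (s • sphereChart p y) ∂(normRpowMeasure volume m) ≤
      (NNReal.sqrt (m + 1) ^ (m + 1) : ℝ≥0) * ∫⁻ x, f x := by
  have hnorm {y : Fin m → ℝ} (hy : ‖y‖ ≤ 1) :
      ‖cubeFace p.1 y‖ₑ ^ (m + 1) ≤ (NNReal.sqrt (m + 1) ^ (m + 1) : ℝ≥0) := by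
    rw [enorm_eq_nnnorm, ← ENNReal.coe_pow, ENNReal.coe_le_coe]
    gcongr
    refine NNReal.coe_le_coe.1 ?_
    simpa using norm_cubeFace_le p.1 hy
  rw [← lintegral_lintegral_smul_cubeFace p.1 hf, ← lintegral_const_mul' _ _ ENNReal.coe_ne_top]
  refine le_trans ?_ (setLIntegral_le_lintegral (closedBall 0 1) _)
  refine setLIntegral_mono' measurableSet_closedBall fun y hy => ?_
  rw [lintegral_smul_sphereChart p y hf]
  gcongr
  exact hnorm (mem_closedBall_zero_iff.1 hy)

theorem exists_lintegral_sphMeasure_lintegral_smul_le (m : ℕ) :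
    ∃ C : ℝ≥0, ∀ f : Euc (m + 1) → ℝ≥0∞, Measurable f →
      ∫⁻ ω, ∫⁻ s : ℝ, f (s • ω) ∂(normRpowMeasure volume m) ∂(sphMeasure (m + 1)) ≤
        C * ∫⁻ x, f x := by
  set K : ℝ≥0 := (2 * NNReal.sqrt (m + 1)) ^ m
  set L : ℝ≥0 := NNReal.sqrt (m + 1) ^ (m + 1)
  refine ⟨K * ∑ _p : Fin (m + 1) × ℤˣ, L, fun f hf => ?_⟩
  calc _ ≤ K * ∑ p : Fin (m + 1) × ℤˣ, ∫⁻ y in closedBall (0 : Fin m → ℝ) 1,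
          ∫⁻ s : ℝ, f (s • sphereChart p y) ∂(normRpowMeasure volume m) := by
        refine (lintegral_mono' (sphMeasure_le_sum_map_sphereChart m) le_rfl).trans ?_
        rw [lintegral_smul_measure, lintegral_finsetSum_measure, ENNReal.smul_def, smul_eq_mul]
        gcongr with p
        exact lintegral_map_le _ _
    _ ≤ K * ∑ _p : Fin (m + 1) × ℤˣ, L * ∫⁻ x, f x := by
        gcongr with p
        exact setLIntegral_lintegral_smul_sphereChart_le p hf
    _ = _ := by
        rw [ENNReal.coe_mul, ENNReal.ofNNReal_finsetSum, mul_assoc, Finset.sum_mul]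

end SphereCharts

section ExtensionOperator

variable {n : ℕ} {g : Euc n → ℂ}

lemma continuous_extOp (hg : Integrable g (sphMeasure n)) : Continuous (extOp n g) := by
  refine continuous_of_dominated (bound := fun ξ => ‖g ξ‖) (fun x => ?_) (fun x => ?_) hg.norm ?_
  · exact (Measurable.aestronglyMeasurable (by fun_prop)).mul hg.1
  · simp only [norm_mul, Complex.norm_exp_I_mul_ofReal, one_mul, le_refl, Filter.eventually_true]
  · exact .of_forall fun ξ => by fun_prop

lemma extOp_add_smul (g : Euc n → ℂ) (v ω : Euc n) (s : ℝ) :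
    extOp n g (v + s • ω) = oscIntegral (sphMeasure n) (fun ξ => ⟪ω, ξ⟫)
      (fun ξ => Complex.exp (Complex.I * (⟪v, ξ⟫ : ℝ)) * g ξ) s := by
  refine integral_congr_ae (.of_forall fun ξ => ?_)
  simp only [← mul_assoc, ← Complex.exp_add, inner_add_left, real_inner_smul_left,
    Complex.ofReal_add, mul_add, add_comm]

-- A translation `v` only modulates the amplitude, and taking its modulus undoes this.
lemma xrayT_sqe_extOp_le (hg : Integrable g (sphMeasure n)) (ω v : Euc n) :
    xrayT n (fun x => sqe (extOp n g x)) ω v ≤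
      ∫⁻ s : ℝ, ‖extOp n (fun ξ => (‖g ξ‖ : ℂ)) (s • ω)‖ₑ ^ 2 := by
  have hmod : Integrable (fun ξ => Complex.exp (Complex.I * (⟪v, ξ⟫ : ℝ)) * g ξ)
      (sphMeasure n) :=
    hg.bdd_mul (c := 1) (Measurable.aestronglyMeasurable (by fun_prop))
      (.of_forall fun ξ => (Complex.norm_exp_I_mul_ofReal _).le)
  have hle := lintegral_enorm_oscIntegral_sq_le (a := fun ξ => ⟪ω, ξ⟫) (by fun_prop) hmod
  have hzero (s : ℝ) := extOp_add_smul (fun ξ => (‖g ξ‖ : ℂ)) 0 ω s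
  simp only [zero_add, inner_zero_left, Complex.ofReal_zero, mul_zero, Complex.exp_zero,
    one_mul] at hzero
  simpa only [← extOp_add_smul, norm_mul, Complex.norm_exp_I_mul_ofReal, one_mul, ← hzero,
    xrayT, sqe, ← enorm_eq_nnnorm] using hle

end ExtensionOperator

section LinesThroughOrigin

lemma exists_rpow_lintegral_normRpowMeasure_smul_mem_le {n : ℕ} (hn : n ≠ 0) {q : ℝ}
    (hq : 1 ≤ q) :
    ∃ C : ℝ≥0, ∀ A : Set (Euc n), MeasurableSet A →
      (∫⁻ ω, normRpowMeasure volume ((n : ℝ) / q - 1) {s : ℝ | s • ω ∈ A} ^ q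
        ∂(sphMeasure n)) ^ (1 / q) ≤ C * volume A ^ (1 / q) := by
  obtain ⟨m, rfl⟩ := Nat.exists_eq_succ_of_ne_zero hn
  have hq0 : 0 < q := by linarith
  obtain ⟨C₁, hC₁⟩ := exists_normRpowMeasure_le_rpow (volume : Measure ℝ)
    (d := ((m + 1 : ℕ) : ℝ)) (by positivity) hq
  obtain ⟨C₂, hC₂⟩ := exists_lintegral_sphMeasure_lintegral_smul_le m
  have hdim : ((m + 1 : ℕ) : ℝ) - 1 = m := by simp
  simp only [Module.finrank_self, Nat.cast_one, hdim] at hC₁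
  refine ⟨C₁ * C₂ ^ (1 / q), fun A hA => ?_⟩
  have hline (ω : Euc (m + 1)) : MeasurableSet {s : ℝ | s • ω ∈ A} :=
    hA.preimage (by fun_prop : Measurable fun s : ℝ => s • ω)
  have hpolar : ∫⁻ ω, normRpowMeasure volume m {s : ℝ | s • ω ∈ A} ∂(sphMeasure (m + 1)) ≤
      C₂ * volume A := by
    simp only [← lintegral_indicator_one hA, ← lintegral_indicator_one (hline _)]
    exact hC₂ (A.indicator 1) (measurable_one.indicator hA)
  calc _ ≤ (∫⁻ ω, (C₁ * normRpowMeasure volume m {s : ℝ | s • ω ∈ A} ^ (1 / q)) ^ q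
          ∂(sphMeasure (m + 1))) ^ (1 / q) := by
        gcongr with ω
        exact hC₁ _ (hline ω)
    _ = C₁ * (∫⁻ ω, normRpowMeasure volume m {s : ℝ | s • ω ∈ A}
          ∂(sphMeasure (m + 1))) ^ (1 / q) := by
        rw [rpow_lintegral_const_mul_rpow _ hq0 ENNReal.coe_ne_top]
        simp only [one_div, ENNReal.rpow_inv_rpow hq0.ne']
    _ ≤ C₁ * (C₂ * volume A) ^ (1 / q) := by gcongr
    _ = _ := by
        rw [ENNReal.mul_rpow_of_nonneg _ _ (by positivity), ENNReal.coe_mul,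
          ENNReal.coe_rpow_of_nonneg _ (by positivity), mul_assoc]

lemma lintegral_normRpowMeasure_enorm_mul_norm_rpow {E : Type*} [NormedAddCommGroup E]
    [NormedSpace ℝ E] [MeasurableSpace E] [BorelSpace E] {G : E → ℂ} (hG : Measurable G)
    {p : ℝ} (hp : 0 ≤ p) (β : ℝ) {ω : E} (hω : ‖ω‖ = 1) :
    ∫⁻ s : ℝ, ‖G (s • ω) * ((‖s • ω‖ ^ β : ℝ) : ℂ)‖ₑ ^ p ∂(normRpowMeasure volume (-(β * p))) =
      ∫⁻ s : ℝ, ‖G (s • ω)‖ₑ ^ p := by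
  rw [lintegral_normRpowMeasure _ _ (by fun_prop)]
  refine lintegral_congr_ae ?_
  filter_upwards [volume.ae_ne (0 : ℝ)] with s hs
  have hweight : ‖((‖s • ω‖ ^ β : ℝ) : ℂ)‖ₑ ^ p = ‖s‖ₑ ^ (β * p) := by
    rw [norm_smul, hω, mul_one, ← ofReal_norm, Complex.norm_real,
      Real.norm_of_nonneg (by positivity), ← ENNReal.ofReal_rpow_of_pos (norm_pos_iff.2 hs),
      ofReal_norm, ENNReal.rpow_mul]
  rw [enorm_mul, ENNReal.mul_rpow_of_nonneg _ _ hp, hweight, mul_left_comm,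
    ← ENNReal.rpow_add _ _ (enorm_ne_zero.2 hs) enorm_ne_top, neg_add_cancel, ENNReal.rpow_zero,
    mul_one]

lemma iSup_xrayT_sqe_extOp_le {n : ℕ} {g : Euc n → ℂ} (hg : Integrable g (sphMeasure n))
    {ω : Euc n} (hω : ‖ω‖ = 1) (β : ℝ) :
    ⨆ v, xrayT n (fun x => sqe (extOp n g x)) ω v ≤
      ∫⁻ s : ℝ, ‖extOp n (fun ξ => (‖g ξ‖ : ℂ)) (s • ω) * ((‖s • ω‖ ^ β : ℝ) : ℂ)‖ₑ ^ (2 : ℝ)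
        ∂(normRpowMeasure volume (-(β * 2))) := by
  have hmeas : Measurable (extOp n fun ξ => (‖g ξ‖ : ℂ)) :=
    (continuous_extOp hg.norm.ofReal).measurable
  rw [lintegral_normRpowMeasure_enorm_mul_norm_rpow hmeas zero_le_two β hω]
  simpa only [ENNReal.rpow_two, iSup_le_iff] using xrayT_sqe_extOp_le hg ω

end LinesThroughOrigin

/-- For `n ≥ 2` and `q ∈ [1,∞)`,
`‖ sup_{v ⊥ ω} X(|ĝdσ|²)(ω,v) ‖_{L^q_ω(𝕊^{n-1})}
  ≲ ‖ (|g|dσ)^∧(x) |x|^{1/2 - n/(2q)} ‖_{L^{2q,2}(ℝⁿ)}²`. -/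
theorem xray_lorentz_reduction (n : ℕ) (hn : 2 ≤ n) (q : ℝ) (hq : 1 ≤ q) :
    ∃ C : ℝ≥0, 0 < C ∧ ∀ g : Euc n → ℂ, Integrable g (sphMeasure n) →
      (∫⁻ ω, (⨆ v : {v : Euc n // ⟪ω, v⟫ = 0},
            xrayT n (fun x => sqe (extOp n g x)) ω v) ^ q ∂(sphMeasure n)) ^ (1 / q)
        ≤ C * lorentzNorm volume (2 * q) 2
            (fun x => extOp n (fun ξ => ((‖g ξ‖ : ℝ) : ℂ)) x *
              ((‖x‖ ^ ((1 : ℝ) / 2 - n / (2 * q)) : ℝ) : ℂ)) ^ 2 := by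
  obtain ⟨C, hC⟩ := exists_rpow_lintegral_normRpowMeasure_smul_mem_le (n := n) (by lia) hq
  refine ⟨C + 1, by positivity, fun g hg => ?_⟩
  set β : ℝ := 1 / 2 - n / (2 * q) with hβ
  have hmeas : Measurable (extOp n fun ξ => (‖g ξ‖ : ℂ)) :=
    (continuous_extOp hg.norm.ofReal).measurable
  have hexp : (n : ℝ) / q - 1 = -(β * 2) := by
    rw [hβ]
    field_simp
    ring
  rw [hexp] at hC
  have hlorentz := lintegral_rpow_comp_le_lorentzNorm two_pos hq (Φ := fun ω s => s • ω)
    (by fun_prop) hC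
    (F := fun x => extOp n (fun ξ => (‖g ξ‖ : ℂ)) x * ((‖x‖ ^ β : ℝ) : ℂ)) (by fun_prop)
  rw [ENNReal.rpow_two] at hlorentz
  refine le_trans ?_ (hlorentz.trans (mul_le_mul_left (by simp) _))
  gcongr ?_ ^ _
  refine setLIntegral_mono' isClosed_sphere.measurableSet fun ω hω => ?_
  gcongr
  exact (iSup_comp_le _ _).trans
    (iSup_xrayT_sqe_extOp_le hg (mem_sphere_zero_iff_norm.1 hω) β)
end
end

section
/- Let n = 2. There is a constant C such that for all δ ∈ (0, 1/2] and all nonnegative g₁, g₂ ∈ L¹(𝕊¹, dσ), ∫_{𝕊¹} BT_δ(g₁,g₂)(ω)^{1/2} dσ(ω) ≤ C log(1/δ) ‖g₁‖_{L¹(𝕊¹)}^{1/2} ‖g₂‖_{L¹(𝕊¹)}^{1/2}. Equivalently, ‖BT_δ(g₁,g₂)‖_{L^{1/2}(𝕊¹)} ≲ (log(1/δ))² ‖g₁‖_{L¹} ‖g₂‖_{L¹}. -/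
open MeasureTheory Metric Real
open scoped ENNReal NNReal RealInnerProductSpace

noncomputable section

/-- Reflection `R_ω(ξ) = ξ - 2(ξ·ω)ω` in the line `⟨ω⟩^⊥`. -/
def reflect (ω ξ : Euc 2) : Euc 2 := ξ - (2 * ⟪ξ, ω⟫) • ω

/-- The bilinear operator `BT_δ` for nonnegative (real-valued) inputs:
`BT_δ(g₁,g₂)(ω) = ∫_{𝕊¹} g₁(ξ) g₂(-R_ω(ξ)) / (|ω·ξ|+δ) dσ(ξ)`. -/
def BTnn (δ : ℝ) (g₁ g₂ : Euc 2 → ℝ) (ω : Euc 2) : ℝ≥0∞ :=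
  ∫⁻ ξ, ENNReal.ofReal (g₁ ξ * g₂ (-(reflect ω ξ))) /
    ENNReal.ofReal (|⟪ω, ξ⟫| + δ) ∂(sphMeasure 2)

/-!
Identify `𝕊¹` with the circle group. Then `ω · ξ = Re (ω / ξ)` and `-R_ω(ξ) = ω² / ξ`, and the
kernel `1 / (|Re w| + δ)` is dominated by the sum of about `log (1 / δ)` dyadic pieces
`(2 / r) 1_{|Re w| ≤ r}`.

Fix a scale `r` and average `ω` over the sets `|Im (ω / a)| ≤ r`. If `|Im (ω / a)| ≤ r` and
`|Re (ω / ξ)| ≤ r`, then both `ξ / a = (ω / a) / (ω / ξ)` and `(ω² / ξ) / a = (ω / a) (ω / ξ)`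
have real part at most `2 r` in absolute value. Since squaring preserves arclength, the integral
over `ω` near `a` is thus at most `2 / r` times the product of the masses of `g₁` and `g₂` on
`|Re (· / a)| ≤ 2 r`. The Cauchy-Schwarz inequality, first in `ω` and then in `a`, gives a bound
independent of `r`, and subadditivity of the square root sums the scales.
-/

section Inequalities

lemma ennreal_rpow_sum_le_sum_rpow {ι : Type*} {p : ℝ} (hp : 0 < p) (hp1 : p ≤ 1)
    (s : Finset ι) (f : ι → ℝ≥0∞) : (∑ i ∈ s, f i) ^ p ≤ ∑ i ∈ s, f i ^ p :=
  Finset.le_sum_of_subadditive (· ^ p) (ENNReal.zero_rpow_of_pos hp).le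
    (fun x y => ENNReal.rpow_add_le_add_rpow x y hp.le hp1) s f

lemma lintegral_mul_rpow_le {α : Type*} [MeasurableSpace α] {μ : Measure α} {w f : α → ℝ≥0∞}
    (hw : AEMeasurable w μ) (hf : AEMeasurable f μ) {p : ℝ} (hp : 0 ≤ p) (hp1 : p ≤ 1) :
    ∫⁻ x, w x * f x ^ p ∂μ ≤ (∫⁻ x, w x ∂μ) ^ (1 - p) * (∫⁻ x, w x * f x ∂μ) ^ p := by
  have split_weight (x : α) : w x * f x ^ p = w x ^ (1 - p) * (w x * f x) ^ p := by
    rw [ENNReal.mul_rpow_of_nonneg _ _ hp, ← mul_assoc,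
      ← ENNReal.rpow_add_of_nonneg _ _ (sub_nonneg.2 hp1) hp, sub_add_cancel, ENNReal.rpow_one]
  simp only [split_weight]
  exact ENNReal.lintegral_mul_norm_pow_le hw (hw.mul hf) (sub_nonneg.2 hp1) hp
    (sub_add_cancel 1 p)

lemma exists_half_pow_near {x : ℝ} (hx : x ≤ 1) (K : ℕ) :
    ∃ j ≤ K, x ≤ (1 / 2) ^ j ∧ (1 / 2) ^ j < 2 * max x ((1 / 2) ^ K) := by
  obtain ⟨j, hlt, hle⟩ := exists_nat_pow_near_of_lt_one
    (lt_max_of_lt_right (by positivity) : 0 < max x ((1 / 2) ^ K))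
    (max_le hx (pow_le_one₀ one_half_pos.le one_half_lt_one.le)) one_half_pos one_half_lt_one
  have hjK : j ≤ K := (pow_le_pow_iff_right_of_lt_one₀ one_half_pos one_half_lt_one).1
    ((le_max_right x _).trans hle)
  rw [pow_succ] at hlt
  exact ⟨j, hjK, (le_max_left x _).trans hle, by linarith⟩

lemma exists_half_pow_le_and_le_log {δ : ℝ} (hδ : 0 < δ) (hδ1 : δ ≤ 1 / 2) :
    ∃ K : ℕ, (1 / 2 : ℝ) ^ K ≤ δ ∧ ((K + 1 : ℕ) : ℝ) ≤ 6 * log (1 / δ) := by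
  have half_le_log_two : 1 / 2 ≤ log 2 := by linarith [log_two_gt_d9]
  have log_two_le : log 2 ≤ log (1 / δ) :=
    log_le_log two_pos ((le_div_iff₀ hδ).2 (by linarith))
  set L := log (1 / δ) / log 2 with hL
  have log_eq : log (1 / δ) = L * log 2 := by rw [hL, div_mul_cancel₀ _ (by positivity)]
  have L_nonneg : 0 ≤ L := div_nonneg (by linarith) (by linarith)
  refine ⟨⌈L⌉₊, ?_, ?_⟩
  · rw [← log_le_log_iff (by positivity) hδ, log_pow, one_div, log_inv]
    have log_inv_eq : log (1 / δ) = -log δ := by rw [one_div, log_inv]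
    nlinarith [Nat.le_ceil L]
  · push_cast
    nlinarith [Nat.ceil_lt_add_one L_nonneg]

end Inequalities

section ReflectionConv

variable {G : Type*} [CommGroup G] [MeasurableSpace G]

/-- The bilinear operator on functions on a commutative group with kernel `k`, obtained by pairing
`h₁` at `ξ` with `h₂` at the reflection `ω ^ 2 / ξ` of `ξ` through `ω`. It becomes `BT_δ` on the
circle group for the kernel `w ↦ 1 / (|Re w| + δ)`. -/
def reflectionConv (μ : Measure G) (k h₁ h₂ : G → ℝ≥0∞) (ω : G) : ℝ≥0∞ :=
  ∫⁻ ξ, k (ω / ξ) * (h₁ ξ * h₂ (ω ^ 2 / ξ)) ∂μ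

variable {μ : Measure G} {k h₁ h₂ : G → ℝ≥0∞}

lemma reflectionConv_mono_kernel {k' : G → ℝ≥0∞} (hk : k ≤ k') (ω : G) :
    reflectionConv μ k h₁ h₂ ω ≤ reflectionConv μ k' h₁ h₂ ω :=
  lintegral_mono fun ξ => mul_le_mul_left (hk (ω / ξ)) _

variable [MeasurableMul₂ G] [MeasurableInv G]

lemma reflectionConv_congr_ae [μ.IsMulLeftInvariant] [μ.IsInvInvariant] {h₁' h₂' : G → ℝ≥0∞}
    (e₁ : h₁ =ᵐ[μ] h₁') (e₂ : h₂ =ᵐ[μ] h₂') :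
    reflectionConv μ k h₁ h₂ = reflectionConv μ k h₁' h₂' := by
  funext ω
  have e₂_reflected : ∀ᵐ ξ ∂μ, h₂ (ω ^ 2 / ξ) = h₂' (ω ^ 2 / ξ) :=
    (Measure.measurePreserving_div_left μ (ω ^ 2)).quasiMeasurePreserving.ae e₂
  refine lintegral_congr_ae ?_
  filter_upwards [e₁, e₂_reflected] with ξ eq₁ eq₂
  rw [eq₁, eq₂]

lemma reflectionConv_finsetSum_kernel {ι : Type*} (s : Finset ι) {k : ι → G → ℝ≥0∞}
    (hk : ∀ i, Measurable (k i)) (hh₁ : Measurable h₁) (hh₂ : Measurable h₂) (ω : G) :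
    reflectionConv μ (fun z => ∑ i ∈ s, k i z) h₁ h₂ ω =
      ∑ i ∈ s, reflectionConv μ (k i) h₁ h₂ ω := by
  simp only [reflectionConv, Finset.sum_mul]
  exact lintegral_finsetSum _ fun i _ => by fun_prop

variable [SFinite μ]

lemma measurable_reflectionConv (hk : Measurable k) (hh₁ : Measurable h₁) (hh₂ : Measurable h₂) :
    Measurable (reflectionConv μ k h₁ h₂) :=
  Measurable.lintegral_prod_right (by fun_prop)

lemma lintegral_rpow_reflectionConv_finsetSum_kernel_le {ι : Type*} (s : Finset ι)
    {k : ι → G → ℝ≥0∞} (hk : ∀ i, Measurable (k i)) (hh₁ : Measurable h₁) (hh₂ : Measurable h₂)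
    {p : ℝ} (hp : 0 < p) (hp1 : p ≤ 1) :
    ∫⁻ ω, reflectionConv μ (fun z => ∑ i ∈ s, k i z) h₁ h₂ ω ^ p ∂μ ≤
      ∑ i ∈ s, ∫⁻ ω, reflectionConv μ (k i) h₁ h₂ ω ^ p ∂μ := by
  rw [← lintegral_finsetSum _ fun i _ => (measurable_reflectionConv (hk i) hh₁ hh₂).pow_const p]
  refine lintegral_mono fun ω => ?_
  rw [reflectionConv_finsetSum_kernel s hk hh₁ hh₂]
  exact ennreal_rpow_sum_le_sum_rpow hp hp1 s _

variable [μ.IsMulLeftInvariant]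

lemma lintegral_lintegral_div_mul [μ.IsInvInvariant] {u h : G → ℝ≥0∞} (hu : Measurable u)
    (hh : Measurable h) :
    ∫⁻ a, ∫⁻ ξ, u (ξ / a) * h ξ ∂μ ∂μ = (∫⁻ z, u z ∂μ) * ∫⁻ ξ, h ξ ∂μ := by
  rw [lintegral_lintegral_swap (by unfold Function.uncurry; fun_prop), ← lintegral_const_mul _ hh]
  refine lintegral_congr fun ξ => ?_
  rw [lintegral_mul_const _ (by fun_prop), lintegral_div_left_eq_self u ξ]

lemma lintegral_lintegral_mul_comp_sq_div (hsq : MeasurePreserving (fun z : G => z ^ 2) μ μ)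
    {f₁ f₂ : G → ℝ≥0∞} (hf₁ : Measurable f₁) (hf₂ : Measurable f₂) :
    ∫⁻ ω, ∫⁻ ξ, f₁ ξ * f₂ (ω ^ 2 / ξ) ∂μ ∂μ = (∫⁻ ξ, f₁ ξ ∂μ) * ∫⁻ η, f₂ η ∂μ := by
  rw [lintegral_lintegral_swap (by unfold Function.uncurry; fun_prop),
    ← lintegral_mul_const _ hf₁]
  refine lintegral_congr fun ξ => ?_
  rw [lintegral_const_mul _ (by fun_prop),
    hsq.lintegral_comp (f := fun η => f₂ (η / ξ)) (by fun_prop), lintegral_div_right_eq_self f₂ ξ]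

variable {t u₁ u₂ : G → ℝ≥0∞}

lemma lintegral_mul_reflectionConv_le (hsq : MeasurePreserving (fun z : G => z ^ 2) μ μ)
    (hk : Measurable k) (hu₁ : Measurable u₁) (hu₂ : Measurable u₂)
    (htk : ∀ z w, t z * k w ≤ u₁ (z / w) * u₂ (z * w))
    (hh₁ : Measurable h₁) (hh₂ : Measurable h₂) (a : G) :
    ∫⁻ ω, t (ω / a) * reflectionConv μ k h₁ h₂ ω ∂μ ≤
      (∫⁻ ξ, u₁ (ξ / a) * h₁ ξ ∂μ) * ∫⁻ η, u₂ (η / a) * h₂ η ∂μ := by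
  have localize (ω ξ : G) : t (ω / a) * k (ω / ξ) ≤ u₁ (ξ / a) * u₂ (ω ^ 2 / ξ / a) := by
    have hdiv : ω / a / (ω / ξ) = ξ / a := div_div_div_cancel_left a ξ ω
    have hmul : ω / a * (ω / ξ) = ω ^ 2 / ξ / a := by
      rw [div_mul_div_comm, ← sq, div_div, mul_comm a]
    simpa only [hdiv, hmul] using htk (ω / a) (ω / ξ)
  calc ∫⁻ ω, t (ω / a) * reflectionConv μ k h₁ h₂ ω ∂μ
      = ∫⁻ ω, ∫⁻ ξ, t (ω / a) * k (ω / ξ) * (h₁ ξ * h₂ (ω ^ 2 / ξ)) ∂μ ∂μ := by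
        refine lintegral_congr fun ω => ?_
        simp only [reflectionConv, mul_assoc]
        rw [lintegral_const_mul _ (by fun_prop)]
    _ ≤ ∫⁻ ω, ∫⁻ ξ, u₁ (ξ / a) * h₁ ξ * (u₂ (ω ^ 2 / ξ / a) * h₂ (ω ^ 2 / ξ)) ∂μ ∂μ := by
        refine lintegral_mono fun ω => lintegral_mono fun ξ => ?_
        exact (mul_le_mul_left (localize ω ξ) _).trans_eq (mul_mul_mul_comm _ _ _ _)
    _ = _ := lintegral_lintegral_mul_comp_sq_div hsq (f₁ := fun ξ => u₁ (ξ / a) * h₁ ξ)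
        (f₂ := fun η => u₂ (η / a) * h₂ η) (by fun_prop) (by fun_prop)

theorem lintegral_rpow_half_reflectionConv_le [μ.IsInvInvariant]
    (hsq : MeasurePreserving (fun z : G => z ^ 2) μ μ)
    (hk : Measurable k) (ht : Measurable t) (hu₁ : Measurable u₁) (hu₂ : Measurable u₂)
    (ht1 : ∫⁻ z, t z ∂μ = 1) (htk : ∀ z w, t z * k w ≤ u₁ (z / w) * u₂ (z * w))
    (hh₁ : Measurable h₁) (hh₂ : Measurable h₂) :
    ∫⁻ ω, reflectionConv μ k h₁ h₂ ω ^ ((1 : ℝ) / 2) ∂μ ≤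
      ((∫⁻ z, u₁ z ∂μ) * ∫⁻ ξ, h₁ ξ ∂μ) ^ ((1 : ℝ) / 2) *
        ((∫⁻ z, u₂ z ∂μ) * ∫⁻ ξ, h₂ ξ ∂μ) ^ ((1 : ℝ) / 2) := by
  have hB : Measurable (reflectionConv μ k h₁ h₂) := measurable_reflectionConv hk hh₁ hh₂
  have hmass {u h : G → ℝ≥0∞} (hu : Measurable u) (hh : Measurable h) :
      Measurable fun a => ∫⁻ ξ, u (ξ / a) * h ξ ∂μ :=
    Measurable.lintegral_prod_right (by fun_prop)
  calc ∫⁻ ω, reflectionConv μ k h₁ h₂ ω ^ ((1 : ℝ) / 2) ∂μ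
      = ∫⁻ a, ∫⁻ ω, t (ω / a) * reflectionConv μ k h₁ h₂ ω ^ ((1 : ℝ) / 2) ∂μ ∂μ := by
        rw [lintegral_lintegral_div_mul ht (hB.pow_const _), ht1, one_mul]
    _ ≤ ∫⁻ a, (∫⁻ ω, t (ω / a) * reflectionConv μ k h₁ h₂ ω ∂μ) ^ ((1 : ℝ) / 2) ∂μ := by
        refine lintegral_mono fun a => (lintegral_mul_rpow_le (w := fun ω => t (ω / a))
          (by fun_prop) hB.aemeasurable one_half_pos.le one_half_lt_one.le).trans_eq ?_
        rw [lintegral_div_right_eq_self t a, ht1, ENNReal.one_rpow, one_mul]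
    _ ≤ ∫⁻ a, (∫⁻ ξ, u₁ (ξ / a) * h₁ ξ ∂μ) ^ ((1 : ℝ) / 2) *
          (∫⁻ η, u₂ (η / a) * h₂ η ∂μ) ^ ((1 : ℝ) / 2) ∂μ := by
        refine lintegral_mono fun a => ?_
        rw [← ENNReal.mul_rpow_of_nonneg _ _ one_half_pos.le]
        exact ENNReal.rpow_le_rpow
          (lintegral_mul_reflectionConv_le hsq hk hu₁ hu₂ htk hh₁ hh₂ a) one_half_pos.le
    _ ≤ _ := by
        rw [← lintegral_lintegral_div_mul hu₁ hh₁, ← lintegral_lintegral_div_mul hu₂ hh₂]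
        exact ENNReal.lintegral_mul_norm_pow_le (hmass hu₁ hh₁).aemeasurable
          (hmass hu₂ hh₂).aemeasurable one_half_pos.le one_half_pos.le (add_halves 1)

end ReflectionConv

section CircleArclength

instance : MeasurableSpace Circle := borel Circle

instance : BorelSpace Circle := ⟨rfl⟩

lemma circle_dist_eq_norm_sub (z w : Circle) : dist z w = ‖(z : ℂ) - w‖ := dist_eq_norm (z : ℂ) w

instance : IsIsometricSMul Circle Circle where
  isometry_smul c := Isometry.of_dist_eq fun x y => by
    simp only [circle_dist_eq_norm_sub, smul_eq_mul, Circle.coe_mul, ← mul_sub, norm_mul,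
      Circle.norm_coe, one_mul]

/-- Arclength on the circle group, as one-dimensional Hausdorff measure. -/
abbrev circleArclength : Measure Circle := μH[1]

lemma lipschitzWith_circleExp : LipschitzWith 1 (Circle.exp : ℝ → Circle) := by
  refine LipschitzWith.of_dist_le_mul fun x y => ?_
  calc dist (Circle.exp x) (Circle.exp y)
      = dist (Circle.exp y * Circle.exp (x - y)) (Circle.exp y * 1) := by
        rw [← Circle.exp_add, add_sub_cancel, mul_one]
    _ = ‖Complex.exp (Complex.I * (x - y : ℝ)) - 1‖ := by
        rw [dist_mul_left, circle_dist_eq_norm_sub, Circle.coe_exp, Circle.coe_one, mul_comm]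
    _ ≤ ‖x - y‖ := norm_exp_I_mul_ofReal_sub_one_le
    _ = (1 : ℝ≥0) * dist x y := by rw [NNReal.coe_one, one_mul, dist_eq_norm]

lemma circleArclength_exp_image_Icc_le (a b : ℝ) :
    circleArclength (Circle.exp '' Set.Icc a b) ≤ ENNReal.ofReal (b - a) := by
  simpa only [ENNReal.coe_one, ENNReal.one_rpow, one_mul, hausdorffMeasure_real, volume_Icc]
    using lipschitzWith_circleExp.hausdorffMeasure_image_le zero_le_one (Set.Icc a b)

/-- The two arcs of the circle within distance `r` of the imaginary axis. -/
def reStrip (r : ℝ) : Set Circle := {z | |(z : ℂ).re| ≤ r}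

/-- The two arcs of the circle within distance `r` of the real axis. -/
def imStrip (r : ℝ) : Set Circle := {z | |(z : ℂ).im| ≤ r}

lemma measurableSet_reStrip (r : ℝ) : MeasurableSet (reStrip r) :=
  (isClosed_le (by fun_prop) continuous_const).measurableSet

lemma measurableSet_imStrip (r : ℝ) : MeasurableSet (imStrip r) :=
  (isClosed_le (by fun_prop) continuous_const).measurableSet

lemma circle_abs_re_le_one (z : Circle) : |(z : ℂ).re| ≤ 1 :=
  (Complex.abs_re_le_norm z).trans_eq (Circle.norm_coe z)

lemma circle_abs_im_le_one (z : Circle) : |(z : ℂ).im| ≤ 1 :=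
  (Complex.abs_im_le_norm z).trans_eq (Circle.norm_coe z)

lemma abs_pi_div_two_sub_abs_arg_le (z : Circle) :
    |(π / 2 - |Complex.arg z|)| ≤ 2 * |(z : ℂ).re| := by
  have sin_eq : sin (π / 2 - |Complex.arg z|) = (z : ℂ).re := by
    rw [sin_pi_div_two_sub, cos_abs, Complex.cos_arg (Circle.coe_ne_zero z), Circle.norm_coe,
      div_one]
  have jordan : 2 / π * |(π / 2 - |Complex.arg z|)| ≤ |(z : ℂ).re| := by
    rw [← sin_eq]
    refine mul_abs_le_abs_sin (abs_le.2 ⟨?_, ?_⟩) <;>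
      linarith [abs_nonneg (Complex.arg z), Complex.abs_arg_le_pi z]
  have half_le : 1 / 2 ≤ 2 / π := by
    rw [div_le_div_iff₀ two_pos pi_pos]
    linarith [pi_le_four]
  linarith [mul_le_mul_of_nonneg_right half_le (abs_nonneg (π / 2 - |Complex.arg z|))]

lemma reStrip_subset_exp_image (r : ℝ) :
    reStrip r ⊆ Circle.exp '' Set.Icc (π / 2 - 2 * r) (π / 2 + 2 * r) ∪
      Circle.exp '' Set.Icc (-(π / 2) - 2 * r) (-(π / 2) + 2 * r) := by
  intro z (hz : |(z : ℂ).re| ≤ r)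
  have harg := abs_le.1 (abs_pi_div_two_sub_abs_arg_le z)
  rcases abs_cases (Complex.arg z) with ⟨habs, -⟩ | ⟨habs, -⟩
  · exact Or.inl ⟨Complex.arg z, ⟨by linarith, by linarith⟩, Circle.exp_arg z⟩
  · exact Or.inr ⟨Complex.arg z, ⟨by linarith, by linarith⟩, Circle.exp_arg z⟩

lemma circleArclength_reStrip_le {r : ℝ} (hr : 0 ≤ r) :
    circleArclength (reStrip r) ≤ ENNReal.ofReal (8 * r) := by
  refine (measure_mono (reStrip_subset_exp_image r)).trans ((measure_union_le _ _).trans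
    ((add_le_add (circleArclength_exp_image_Icc_le _ _)
      (circleArclength_exp_image_Icc_le _ _)).trans_eq ?_))
  rw [← ENNReal.ofReal_add (by linarith) (by linarith)]
  ring_nf

lemma le_circleArclength_imStrip {r : ℝ} (hr : r ≤ 1) :
    ENNReal.ofReal (2 * r) ≤ circleArclength (imStrip r) := by
  have im_lipschitz : LipschitzWith 1 fun z : Circle => (z : ℂ).im :=
    LipschitzWith.of_dist_le_mul fun x y => by
      rw [NNReal.coe_one, one_mul, dist_eq, ← Complex.sub_im, circle_dist_eq_norm_sub]
      exact Complex.abs_im_le_norm _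
  have Icc_subset : Set.Icc (-r) r ⊆ (fun z : Circle => (z : ℂ).im) '' imStrip r := by
    intro s hs
    have him : (Circle.exp (arcsin s) : ℂ).im = s := by
      rw [Circle.coe_exp, Complex.exp_ofReal_mul_I_im, sin_arcsin] <;> linarith [hs.1, hs.2]
    exact ⟨Circle.exp (arcsin s), by rwa [imStrip, Set.mem_ofPred_eq, him, abs_le], him⟩
  calc ENNReal.ofReal (2 * r) = volume (Set.Icc (-r) r) := by rw [volume_Icc]; ring_nf
    _ ≤ volume ((fun z : Circle => (z : ℂ).im) '' imStrip r) := measure_mono Icc_subset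
    _ ≤ circleArclength (imStrip r) := by
        simpa only [ENNReal.coe_one, ENNReal.one_rpow, one_mul, hausdorffMeasure_real]
          using im_lipschitz.hausdorffMeasure_image_le zero_le_one (imStrip r)

lemma circleArclength_imStrip_ne_zero {r : ℝ} (hr : 0 < r) (hr1 : r ≤ 1) :
    circleArclength (imStrip r) ≠ 0 :=
  ((ENNReal.ofReal_pos.2 (by linarith)).trans_le (le_circleArclength_imStrip hr1)).ne'

instance : circleArclength.IsHaarMeasure := by
  refine Measure.isHaarMeasure_of_isCompact_nonempty_interior _ Set.univ isCompact_univ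
    (by simp) ?_ ?_
  · exact fun h => circleArclength_imStrip_ne_zero one_pos le_rfl
      (measure_mono_null (Set.subset_univ _) h)
  · have univ_eq : (Set.univ : Set Circle) = reStrip 1 :=
      (Set.eq_univ_of_forall circle_abs_re_le_one).symm
    exact univ_eq ▸ ne_top_of_le_ne_top ENNReal.ofReal_ne_top
      (circleArclength_reStrip_le zero_le_one)

lemma measurePreserving_circle_sq :
    MeasurePreserving (fun z : Circle => z ^ 2) circleArclength circleArclength := by
  refine (powMonoidHom (α := Circle) 2).measurePreserving (continuous_pow 2) (fun z => ?_) rfl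
  refine ⟨Circle.exp (Complex.arg z / 2), ?_⟩
  rw [powMonoidHom_apply, sq, ← Circle.exp_add, add_halves, Circle.exp_arg]

end CircleArclength

section CircleBound

lemma div_and_mul_mem_reStrip {r s : ℝ} {z w : Circle} (hz : z ∈ imStrip r) (hw : w ∈ reStrip s) :
    z / w ∈ reStrip (s + r) ∧ z * w ∈ reStrip (s + r) := by
  have hre : |(z : ℂ).re * (w : ℂ).re| ≤ s := by
    rw [abs_mul]
    exact (mul_le_of_le_one_left (abs_nonneg _) (circle_abs_re_le_one z)).trans hw
  have him : |(z : ℂ).im * (w : ℂ).im| ≤ r := by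
    rw [abs_mul]
    exact (mul_le_of_le_one_right (abs_nonneg _) (circle_abs_im_le_one w)).trans hz
  constructor
  · change |((z / w : Circle) : ℂ).re| ≤ s + r
    rw [div_eq_mul_inv, Circle.coe_mul, Circle.coe_inv_eq_conj, Complex.mul_re, Complex.conj_re,
      Complex.conj_im, mul_neg, sub_neg_eq_add]
    exact (abs_add_le _ _).trans (add_le_add hre him)
  · change |((z * w : Circle) : ℂ).re| ≤ s + r
    rw [Circle.coe_mul, Complex.mul_re]
    exact (abs_sub _ _).trans (add_le_add hre him)

/-- The piece `(2 / r) 1_{|Re w| ≤ r}` of the kernel `1 / (|Re w| + δ)` at scale `r`. -/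
def scaleKernel (r : ℝ) : Circle → ℝ≥0∞ :=
  (reStrip r).indicator fun _ => ENNReal.ofReal (2 / r)

lemma measurable_scaleKernel (r : ℝ) : Measurable (scaleKernel r) :=
  measurable_const.indicator (measurableSet_reStrip r)

lemma inv_abs_re_add_le_sum_scaleKernel {δ : ℝ} {K : ℕ} (hK : (1 / 2 : ℝ) ^ K ≤ δ) (w : Circle) :
    (ENNReal.ofReal (|(w : ℂ).re| + δ))⁻¹ ≤
      ∑ j ∈ Finset.range (K + 1), scaleKernel ((1 / 2) ^ j) w := by
  obtain ⟨j, hjK, hmem, hlt⟩ := exists_half_pow_near (circle_abs_re_le_one w) K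
  have hδ : 0 < δ := (by positivity : (0 : ℝ) < (1 / 2) ^ K).trans_le hK
  have hpos : 0 < |(w : ℂ).re| + δ := by positivity
  have hmax : max |(w : ℂ).re| ((1 / 2) ^ K) ≤ |(w : ℂ).re| + δ :=
    max_le (by linarith) (by linarith [abs_nonneg (w : ℂ).re])
  calc (ENNReal.ofReal (|(w : ℂ).re| + δ))⁻¹ = ENNReal.ofReal (|(w : ℂ).re| + δ)⁻¹ :=
        (ENNReal.ofReal_inv_of_pos hpos).symm
    _ ≤ ENNReal.ofReal (2 / (1 / 2) ^ j) := by
        refine ENNReal.ofReal_le_ofReal ?_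
        rw [inv_eq_one_div, div_le_div_iff₀ hpos (by positivity)]
        linarith
    _ = scaleKernel ((1 / 2) ^ j) w := by
        rw [scaleKernel, Set.indicator_of_mem (by exact hmem)]
    _ ≤ _ := Finset.single_le_sum (f := fun i => scaleKernel ((1 / 2) ^ i) w)
        (fun _ _ => zero_le) (Finset.mem_range_succ_iff.2 hjK)

lemma indicator_imStrip_mul_scaleKernel_le {r : ℝ} (hr : 0 < r) (hr1 : r ≤ 1) (z w : Circle) :
    (imStrip r).indicator (fun _ => (circleArclength (imStrip r))⁻¹) z * scaleKernel r w ≤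
      (reStrip (2 * r)).indicator (fun _ => ENNReal.ofReal (1 / r)) (z / w) *
        (reStrip (2 * r)).indicator (fun _ => ENNReal.ofReal (1 / r)) (z * w) := by
  by_cases hz : z ∈ imStrip r
  swap; · simp [hz]
  by_cases hw : w ∈ reStrip r
  swap; · simp [scaleKernel, hw]
  obtain ⟨hdiv, hmul⟩ := div_and_mul_mem_reStrip hz hw
  rw [← two_mul] at hdiv hmul
  rw [scaleKernel, Set.indicator_of_mem hz, Set.indicator_of_mem hw, Set.indicator_of_mem hdiv,
    Set.indicator_of_mem hmul]
  calc (circleArclength (imStrip r))⁻¹ * ENNReal.ofReal (2 / r)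
      ≤ (ENNReal.ofReal (2 * r))⁻¹ * ENNReal.ofReal (2 / r) := by
        gcongr
        exact le_circleArclength_imStrip hr1
    _ = ENNReal.ofReal (1 / r) * ENNReal.ofReal (1 / r) := by
        rw [← ENNReal.ofReal_inv_of_pos (by positivity), ← ENNReal.ofReal_mul (by positivity),
          ← ENNReal.ofReal_mul (by positivity)]
        congr 1
        field_simp

variable {h₁ h₂ : Circle → ℝ≥0∞}

lemma lintegral_rpow_half_reflectionConv_scaleKernel_le {r : ℝ} (hr : 0 < r) (hr1 : r ≤ 1)
    (hh₁ : Measurable h₁) (hh₂ : Measurable h₂) :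
    ∫⁻ ω, reflectionConv circleArclength (scaleKernel r) h₁ h₂ ω ^ ((1 : ℝ) / 2) ∂circleArclength ≤
      16 * ((∫⁻ ξ, h₁ ξ ∂circleArclength) ^ ((1 : ℝ) / 2) *
        (∫⁻ ξ, h₂ ξ ∂circleArclength) ^ ((1 : ℝ) / 2)) := by
  set u : Circle → ℝ≥0∞ := (reStrip (2 * r)).indicator fun _ => ENNReal.ofReal (1 / r) with hu
  have measurable_u : Measurable u := measurable_const.indicator (measurableSet_reStrip _)
  have lintegral_u : ∫⁻ z, u z ∂circleArclength ≤ 16 := by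
    rw [hu, lintegral_indicator_const (measurableSet_reStrip _)]
    calc ENNReal.ofReal (1 / r) * circleArclength (reStrip (2 * r))
        ≤ ENNReal.ofReal (1 / r) * ENNReal.ofReal (8 * (2 * r)) := by
          gcongr
          exact circleArclength_reStrip_le (by positivity)
      _ = ENNReal.ofReal 16 := by
          rw [← ENNReal.ofReal_mul (by positivity)]
          congr 1
          field_simp
          norm_num
      _ = 16 := by norm_num
  have lintegral_t : ∫⁻ z, (imStrip r).indicator (fun _ => (circleArclength (imStrip r))⁻¹) z
      ∂circleArclength = 1 := by
    rw [lintegral_indicator_const (measurableSet_imStrip r)]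
    exact ENNReal.inv_mul_cancel (circleArclength_imStrip_ne_zero hr hr1) (measure_ne_top _ _)
  refine (lintegral_rpow_half_reflectionConv_le measurePreserving_circle_sq
    (measurable_scaleKernel r) (measurable_const.indicator (measurableSet_imStrip r))
    measurable_u measurable_u lintegral_t (indicator_imStrip_mul_scaleKernel_le hr hr1)
    hh₁ hh₂).trans ?_
  rw [ENNReal.mul_rpow_of_nonneg _ _ one_half_pos.le,
    ENNReal.mul_rpow_of_nonneg _ _ one_half_pos.le, mul_mul_mul_comm,
    ← ENNReal.rpow_add_of_nonneg _ _ one_half_pos.le one_half_pos.le, add_halves, ENNReal.rpow_one]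
  exact mul_le_mul_left lintegral_u _

theorem lintegral_rpow_half_reflectionConv_inv_abs_re_add_le {δ : ℝ} {K : ℕ}
    (hK : (1 / 2 : ℝ) ^ K ≤ δ)
    (hh₁ : AEMeasurable h₁ circleArclength) (hh₂ : AEMeasurable h₂ circleArclength) :
    ∫⁻ ω, reflectionConv circleArclength (fun w => (ENNReal.ofReal (|(w : ℂ).re| + δ))⁻¹)
        h₁ h₂ ω ^ ((1 : ℝ) / 2) ∂circleArclength ≤
      (K + 1 : ℕ) * (16 * ((∫⁻ ξ, h₁ ξ ∂circleArclength) ^ ((1 : ℝ) / 2) *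
        (∫⁻ ξ, h₂ ξ ∂circleArclength) ^ ((1 : ℝ) / 2))) := by
  obtain ⟨f₁, hf₁, e₁⟩ := hh₁
  obtain ⟨f₂, hf₂, e₂⟩ := hh₂
  rw [reflectionConv_congr_ae e₁ e₂, lintegral_congr_ae e₁, lintegral_congr_ae e₂]
  set N := (∫⁻ ξ, f₁ ξ ∂circleArclength) ^ ((1 : ℝ) / 2) *
    (∫⁻ ξ, f₂ ξ ∂circleArclength) ^ ((1 : ℝ) / 2)
  calc _ ≤ ∫⁻ ω, reflectionConv circleArclength
          (fun w => ∑ j ∈ Finset.range (K + 1), scaleKernel ((1 / 2) ^ j) w) f₁ f₂ ω ^ ((1 : ℝ) / 2)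
          ∂circleArclength := by
        gcongr with ω
        exact reflectionConv_mono_kernel (inv_abs_re_add_le_sum_scaleKernel hK) ω
    _ ≤ ∑ j ∈ Finset.range (K + 1), ∫⁻ ω, reflectionConv circleArclength
          (scaleKernel ((1 / 2) ^ j)) f₁ f₂ ω ^ ((1 : ℝ) / 2) ∂circleArclength :=
        lintegral_rpow_reflectionConv_finsetSum_kernel_le _ (fun _ => measurable_scaleKernel _)
          hf₁ hf₂ one_half_pos one_half_lt_one.le
    _ ≤ ∑ j ∈ Finset.range (K + 1), 16 * N :=
        Finset.sum_le_sum fun j _ => lintegral_rpow_half_reflectionConv_scaleKernel_le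
          (by positivity) (pow_le_one₀ one_half_pos.le one_half_lt_one.le) hf₁ hf₂
    _ = (K + 1 : ℕ) * (16 * N) := by rw [Finset.sum_const, Finset.card_range, nsmul_eq_mul]

end CircleBound

section UnitSphere

/-- The isometric identification `x + i y ↦ (x, y)` of the circle group with `𝕊¹ ⊂ ℝ²`. -/
def circleToEuc (z : Circle) : Euc 2 := Complex.orthonormalBasisOneI.repr (z : ℂ)

lemma isometry_circleToEuc : Isometry circleToEuc := Isometry.of_dist_eq fun z w => by
  rw [circleToEuc, circleToEuc, LinearIsometryEquiv.dist_map, circle_dist_eq_norm_sub, dist_eq_norm]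

lemma measurableEmbedding_circleToEuc : MeasurableEmbedding circleToEuc :=
  isometry_circleToEuc.isClosedEmbedding.measurableEmbedding

lemma range_circleToEuc : Set.range circleToEuc = sphere (0 : Euc 2) 1 := by
  ext x
  constructor
  · rintro ⟨z, rfl⟩
    rw [mem_sphere_zero_iff_norm, circleToEuc, LinearIsometryEquiv.norm_map, Circle.norm_coe]
  · intro hx
    have hnorm : ‖Complex.orthonormalBasisOneI.repr.symm x‖ = 1 := by
      rw [LinearIsometryEquiv.norm_map, mem_sphere_zero_iff_norm.1 hx]
    exact ⟨⟨_, mem_sphere_zero_iff_norm.2 hnorm⟩,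
      Complex.orthonormalBasisOneI.repr.apply_symm_apply x⟩

lemma map_circleToEuc_circleArclength : circleArclength.map circleToEuc = sphMeasure 2 := by
  rw [isometry_circleToEuc.map_hausdorffMeasure (Or.inl zero_le_one), range_circleToEuc, sphMeasure]
  norm_num

lemma lintegral_sphMeasure_two (f : Euc 2 → ℝ≥0∞) :
    ∫⁻ x, f x ∂sphMeasure 2 = ∫⁻ z, f (circleToEuc z) ∂circleArclength := by
  rw [← map_circleToEuc_circleArclength, measurableEmbedding_circleToEuc.lintegral_map]

lemma inner_circleToEuc (ω ξ : Circle) :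
    ⟪circleToEuc ω, circleToEuc ξ⟫ = ((ω / ξ : Circle) : ℂ).re := by
  rw [circleToEuc, circleToEuc, LinearIsometryEquiv.inner_map_map, Complex.inner, div_eq_mul_inv,
    Circle.coe_mul, Circle.coe_inv_eq_conj, ← Complex.conj_re, map_mul, Complex.conj_conj, mul_comm]

lemma neg_reflect_circleToEuc (ω ξ : Circle) :
    -(reflect (circleToEuc ω) (circleToEuc ξ)) = circleToEuc (ω ^ 2 / ξ) := by
  rw [reflect, inner_circleToEuc, circleToEuc, circleToEuc, circleToEuc, ← map_smul, ← map_sub,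
    ← map_neg]
  congr 1
  have mul_conj_self : (ω : ℂ) * (starRingEnd ℂ) (ω : ℂ) = 1 := by
    rw [Complex.mul_conj, Circle.normSq_coe, Complex.ofReal_one]
  have add_conj_eq := Complex.add_conj ((ξ : ℂ) * (starRingEnd ℂ) (ω : ℂ))
  rw [map_mul, Complex.conj_conj] at add_conj_eq
  simp only [div_eq_mul_inv, Circle.coe_mul, Circle.coe_pow, Circle.coe_inv_eq_conj,
    Complex.real_smul, ← add_conj_eq]
  linear_combination (ξ : ℂ) * mul_conj_self

lemma lintegral_sphMeasure_two_reflect (δ : ℝ) (f₁ f₂ : Euc 2 → ℝ≥0∞) (ω : Circle) :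
    ∫⁻ ξ, f₁ ξ * f₂ (-(reflect (circleToEuc ω) ξ)) / ENNReal.ofReal (|⟪circleToEuc ω, ξ⟫| + δ)
        ∂sphMeasure 2 =
      reflectionConv circleArclength (fun w => (ENNReal.ofReal (|(w : ℂ).re| + δ))⁻¹)
        (f₁ ∘ circleToEuc) (f₂ ∘ circleToEuc) ω := by
  simp only [lintegral_sphMeasure_two, inner_circleToEuc, neg_reflect_circleToEuc, reflectionConv,
    Function.comp_apply, div_eq_mul_inv, mul_comm]

end UnitSphere

theorem BT_L_half_bound_general :
    ∃ C : ℝ≥0, 0 < C ∧ ∀ δ : ℝ, 0 < δ → δ ≤ 1 / 2 →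
      ∀ f₁ f₂ : Euc 2 → ℝ≥0∞, AEMeasurable f₁ (sphMeasure 2) → AEMeasurable f₂ (sphMeasure 2) →
        (∫⁻ ω, (∫⁻ ξ, f₁ ξ * f₂ (-(reflect ω ξ)) / ENNReal.ofReal (|⟪ω, ξ⟫| + δ)
            ∂(sphMeasure 2)) ^ ((1 : ℝ) / 2) ∂(sphMeasure 2))
          ≤ C * ENNReal.ofReal (Real.log (1 / δ)) *
            (∫⁻ ξ, f₁ ξ ∂(sphMeasure 2)) ^ ((1 : ℝ) / 2) *
            (∫⁻ ξ, f₂ ξ ∂(sphMeasure 2)) ^ ((1 : ℝ) / 2) := by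
  refine ⟨6 * 16, by norm_num, fun δ hδ hδ1 f₁ f₂ hf₁ hf₂ => ?_⟩
  obtain ⟨K, hK, hKlog⟩ := exists_half_pow_le_and_le_log hδ hδ1
  have scales_le : ((K + 1 : ℕ) : ℝ≥0∞) ≤ 6 * ENNReal.ofReal (log (1 / δ)) := by
    rw [← ENNReal.ofReal_natCast, ← ENNReal.ofReal_ofNat 6, ← ENNReal.ofReal_mul (by norm_num)]
    exact ENNReal.ofReal_le_ofReal hKlog
  rw [← map_circleToEuc_circleArclength, measurableEmbedding_circleToEuc.aemeasurable_map_iff]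
    at hf₁ hf₂
  rw [lintegral_sphMeasure_two, lintegral_sphMeasure_two f₁, lintegral_sphMeasure_two f₂]
  simp only [lintegral_sphMeasure_two_reflect]
  refine (lintegral_rpow_half_reflectionConv_inv_abs_re_add_le hK hf₁ hf₂).trans
    ((mul_le_mul_left scales_le _).trans_eq ?_)
  simp only [Function.comp_apply]
  push_cast
  ring

/-- For nonnegative `g₁, g₂ ∈ L¹(𝕊¹)` and `δ ∈ (0,1/2]`:
`∫_{𝕊¹} BT_δ(g₁,g₂)(ω)^{1/2} dσ(ω) ≤ C log(1/δ) ‖g₁‖_{L¹}^{1/2} ‖g₂‖_{L¹}^{1/2}`. -/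
theorem BT_L_half_bound :
    ∃ C : ℝ≥0, 0 < C ∧ ∀ δ : ℝ, 0 < δ → δ ≤ 1 / 2 →
      ∀ g₁ g₂ : Euc 2 → ℝ, (∀ x, 0 ≤ g₁ x) → (∀ x, 0 ≤ g₂ x) →
        Integrable g₁ (sphMeasure 2) → Integrable g₂ (sphMeasure 2) →
          (∫⁻ ω, BTnn δ g₁ g₂ ω ^ ((1 : ℝ) / 2) ∂(sphMeasure 2))
            ≤ C * ENNReal.ofReal (Real.log (1 / δ)) *
              (∫⁻ ξ, ENNReal.ofReal (g₁ ξ) ∂(sphMeasure 2)) ^ ((1 : ℝ) / 2) *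
              (∫⁻ ξ, ENNReal.ofReal (g₂ ξ) ∂(sphMeasure 2)) ^ ((1 : ℝ) / 2) := by
  obtain ⟨C, hC, bound⟩ := BT_L_half_bound_general
  refine ⟨C, hC, fun δ hδ hδ1 g₁ g₂ hg₁ _ hi₁ hi₂ => ?_⟩
  simpa only [BTnn, ENNReal.ofReal_mul (hg₁ _)] using
    bound δ hδ hδ1 _ _ hi₁.aemeasurable.ennreal_ofReal hi₂.aemeasurable.ennreal_ofReal
end
end
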